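/- arXiv:1601.07113 — 6 statements merged into one kernel-verified Lean document; each statement's English description precedes it below -/
import Mathlib

section
/- Let α > 3, β > 0, t₀ > 0, let Φ : H → ℝ be convex and twice continuously differentiable with argmin Φ nonempty, and let x : [t₀, ∞) → H be a solution of (DIN-AVD). Then there exists x∞ ∈ argmin Φ such that x(t) converges weakly to x∞ as t → ∞, i.e., ⟨x(t), y⟩ → ⟨x∞, y⟩ for every y ∈ H. -/
open Filter MeasureTheory Set
open scoped Topology RealInnerProductSpace

variable {H : Type*} [NormedAddCommGroup H] [InnerProductSpace ℝ H] [CompleteSpace H]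

/-- `x`, together with its first and second derivatives `x'`, `x''`, is a twice continuously
differentiable solution of (DIN-AVD) on `[t₀, ∞)`:
`ẍ(t) + (α/t) ẋ(t) + β ∇²Φ(x(t)) ẋ(t) + ∇Φ(x(t)) = 0`. -/
def IsDINAVDSolution (α β t₀ : ℝ) (Φ : H → ℝ) (x x' x'' : ℝ → H) : Prop :=
  (∀ t ∈ Set.Ici t₀, HasDerivAt x (x' t) t) ∧
  (∀ t ∈ Set.Ici t₀, HasDerivAt x' (x'' t) t) ∧
  ContinuousOn x'' (Set.Ici t₀) ∧
  ∀ t ∈ Set.Ici t₀,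
    x'' t + (α / t) • x' t + β • (fderiv ℝ (gradient Φ) (x t)) (x' t)
      + gradient Φ (x t) = 0

theorem grad_ineq {Φ : H → ℝ} (hconv : ConvexOn ℝ Set.univ Φ) (hd : Differentiable ℝ Φ) (p q : H) :
    Φ p + ⟪gradient Φ p, q - p⟫ ≤ Φ q := by
  have h1 : ConvexOn ℝ Set.univ (fun s : ℝ => Φ (AffineMap.lineMap p q s)) := by
    have := hconv.comp_affineMap (AffineMap.lineMap (k := ℝ) p q)
    rw [Set.preimage_univ] at this
    exact this
  have h2 : HasDerivAt (fun s : ℝ => Φ (AffineMap.lineMap p q s)) ⟪gradient Φ p, q - p⟫ 0 := by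
    have ha : HasDerivAt (fun s : ℝ => (AffineMap.lineMap p q s : H)) (q - p) 0 :=
      AffineMap.hasDerivAt_lineMap
    have hb : HasFDerivAt Φ (fderiv ℝ Φ p) (AffineMap.lineMap p q (0:ℝ)) := by
      simpa using (hd p).hasFDerivAt
    have := hb.comp_hasDerivAt (0:ℝ) ha
    have e : ⟪gradient Φ p, q - p⟫ = fderiv ℝ Φ p (q - p) := by
      simp [gradient]
    rw [e]; exact this
  have := h1.le_slope_of_hasDerivAt (Set.mem_univ 0) (Set.mem_univ 1) zero_lt_one h2
  rw [slope_def_field] at this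
  simp only [AffineMap.lineMap_apply_zero, AffineMap.lineMap_apply_one, sub_zero, div_one] at this
  linarith

theorem avg_aux {a M T : ℝ} (ha : 0 < a) (p p' : ℝ → ℝ) (hT : 0 < T)
    (hp : ∀ t ≥ T, HasDerivAt p (p' t) t) (h : ∀ t ≥ T, t * p' t + a * p t ≤ M)
    {δ : ℝ} (hδ : 0 < δ) : ∀ᶠ t in atTop, p t < M / a + δ := by
  have hd : ∀ t ≥ T, HasDerivAt (fun t => t ^ a * (p t - M / a))
      (a * t ^ (a - 1) * (p t - M / a) + t ^ a * p' t) t := by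
    intro t ht
    have h1 := Real.hasDerivAt_rpow_const (x := t) (p := a) (Or.inl (by linarith))
    exact h1.mul ((hp t ht).sub_const _)
  have hanti : AntitoneOn (fun t => t ^ a * (p t - M / a)) (Set.Ici T) := by
    apply antitoneOn_of_deriv_nonpos (convex_Ici T)
    · intro t ht; exact (hd t ht).continuousAt.continuousWithinAt
    · intro t ht; rw [interior_Ici] at ht
      exact (hd t (le_of_lt ht)).differentiableAt.differentiableWithinAt
    · intro t ht; rw [interior_Ici] at ht
      have htT : T ≤ t := le_of_lt ht
      have ht0 : 0 < t := by linarith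
      rw [(hd t htT).deriv]
      have e : t ^ a = t ^ (a - 1) * t := by
        rw [Real.rpow_sub_one ht0.ne']; field_simp
      rw [e]
      have : a * t ^ (a - 1) * (p t - M / a) + t ^ (a - 1) * t * p' t
          = t ^ (a - 1) * (t * p' t + a * p t - M) := by field_simp; ring
      rw [this]
      exact mul_nonpos_of_nonneg_of_nonpos (Real.rpow_nonneg ht0.le _) (by linarith [h t htT])
  set C := T ^ a * (p T - M / a)
  have hlim : Tendsto (fun t : ℝ => t ^ a * δ) atTop atTop :=
    (tendsto_rpow_atTop ha).atTop_mul_const hδ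
  filter_upwards [hlim.eventually_gt_atTop C, eventually_ge_atTop T] with t h1 h2
  have h3 : t ^ a * (p t - M / a) ≤ C := hanti (Set.mem_Ici.2 le_rfl) h2 h2
  have h4 : t ^ a * (p t - M / a) < t ^ a * δ := lt_of_le_of_lt h3 h1
  have := lt_of_mul_lt_mul_left h4 (Real.rpow_nonneg (by linarith) _)
  linarith

theorem avg_tendsto {a L T : ℝ} (ha : 0 < a) (p p' : ℝ → ℝ)
    (hp : ∀ t ≥ T, HasDerivAt p (p' t) t)
    (h : Tendsto (fun t => t * p' t + a * p t) atTop (𝓝 L)) :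
    Tendsto p atTop (𝓝 (L / a)) := by
  rw [Metric.tendsto_nhds] at h ⊢
  intro ε hε
  have h2 := h (a * (ε / 2)) (by positivity)
  obtain ⟨T1, hT1⟩ := eventually_atTop.1 h2
  set S := max (max T T1) 1
  have hS0 : 0 < S := lt_of_lt_of_le one_pos (le_max_right _ _)
  have hST : T ≤ S := (le_max_left _ _).trans (le_max_left _ _)
  have hST1 : T1 ≤ S := (le_max_right _ _).trans (le_max_left _ _)
  have hup := avg_aux (M := L + a * (ε/2)) ha p p' hS0 (fun t ht => hp t (hST.trans ht))
    (fun t ht => by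
      have := hT1 t (hST1.trans ht)
      rw [Real.dist_eq, abs_lt] at this; linarith) (half_pos hε)
  have hdn := avg_aux (M := - L + a * (ε/2)) ha (fun t => - p t) (fun t => - p' t) hS0
    (fun t ht => (hp t (hST.trans ht)).neg)
    (fun t ht => by
      have := hT1 t (hST1.trans ht)
      rw [Real.dist_eq, abs_lt] at this; linarith) (half_pos hε)
  filter_upwards [hup, hdn] with t h3 h4
  rw [Real.dist_eq, abs_lt]
  have e1 : (L + a * (ε/2)) / a = L / a + ε / 2 := by field_simp
  have e2 : (-L + a * (ε/2)) / a = -(L / a) + ε / 2 := by field_simp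
  rw [e1] at h3; rw [e2] at h4
  constructor <;> linarith

theorem antitone_tendsto {f : ℝ → ℝ} {T B : ℝ} (h : AntitoneOn f (Set.Ici T))
    (hb : ∀ t ≥ T, B ≤ f t) : ∃ l, Tendsto f atTop (𝓝 l) := by
  have h1 : Antitone (fun t => f (max t T)) := fun s t hst =>
    h (Set.mem_Ici.2 (le_max_right _ _)) (Set.mem_Ici.2 (le_max_right _ _)) (max_le_max_right _ hst)
  have h2 : BddBelow (Set.range (fun t => f (max t T))) := by
    refine ⟨B, ?_⟩
    rintro _ ⟨t, rfl⟩
    exact hb _ (le_max_right _ _)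
  refine ⟨_, (tendsto_atTop_ciInf h1 h2).congr' ?_⟩
  filter_upwards [eventually_ge_atTop T] with t ht
  simp [max_eq_left ht]

theorem antitone_of_deriv {f f' : ℝ → ℝ} {T : ℝ} (hd : ∀ t ≥ T, HasDerivAt f (f' t) t)
    (hn : ∀ t ≥ T, f' t ≤ 0) : AntitoneOn f (Set.Ici T) := by
  apply antitoneOn_of_deriv_nonpos (convex_Ici T)
  · intro t ht; exact (hd t ht).continuousAt.continuousWithinAt
  · intro t ht; rw [interior_Ici] at ht
    exact (hd t (le_of_lt ht)).differentiableAt.differentiableWithinAt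
  · intro t ht; rw [interior_Ici] at ht
    rw [(hd t (le_of_lt ht)).deriv]; exact hn t (le_of_lt ht)

/-- Weak limits along ultrafilters for bounded curves. -/
theorem weak_limit (x : ℝ → H) (R : ℝ) (hR : ∀ᶠ t in atTop, ‖x t‖ ≤ R) (U : Ultrafilter ℝ)
    (hU : (U : Filter ℝ) ≤ atTop) :
    ∃ p : H, ∀ y, Tendsto (fun t => ⟪x t, y⟫) U (𝓝 ⟪p, y⟫) := by
  have hK := WeakDual.isCompact_closedBall (𝕜 := ℝ) (E := H) 0 R
  set F : ℝ → WeakDual ℝ H := fun t => StrongDual.toWeakDual (InnerProductSpace.toDual ℝ H (x t))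
  have hmem : (U.map F : Filter (WeakDual ℝ H)) ≤
      𝓟 (WeakDual.toStrongDual ⁻¹' Metric.closedBall (0 : StrongDual ℝ H) R) := by
    rw [le_principal_iff]
    have := hU hR
    rw [Ultrafilter.coe_map, Filter.mem_map]
    refine Filter.mem_of_superset this ?_
    intro t ht
    have : ‖x t‖ ≤ R := ht
    simp [F]
    exact this
  obtain ⟨f, -, hf⟩ := hK.ultrafilter_le_nhds _ hmem
  refine ⟨(InnerProductSpace.toDual ℝ H).symm (WeakDual.toStrongDual f), fun y => ?_⟩
  have h1 : Tendsto F U (𝓝 f) := hf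
  have h2 := ((WeakDual.eval_continuous (𝕜 := ℝ) (E := H) y).tendsto f).comp h1
  simp only [InnerProductSpace.toDual_symm_apply]
  exact h2

theorem opial (x : ℝ → H) (S : Set H) (hne : S.Nonempty)
    (hlim : ∀ z ∈ S, ∃ l, Tendsto (fun t => ‖x t - z‖ ^ 2) atTop (𝓝 l))
    (hcl : ∀ (U : Ultrafilter ℝ) (p : H), (U : Filter ℝ) ≤ atTop →
      (∀ y, Tendsto (fun t => ⟪x t, y⟫) U (𝓝 ⟪p, y⟫)) → p ∈ S) :
    ∃ p ∈ S, ∀ y, Tendsto (fun t => ⟪x t, y⟫) atTop (𝓝 ⟪p, y⟫) := by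
  obtain ⟨z, hz⟩ := hne
  obtain ⟨l, hl⟩ := hlim z hz
  have hb : ∀ᶠ t in atTop, ‖x t‖ ≤ (|l| + 2) + ‖z‖ := by
    filter_upwards [hl.eventually_lt_const (lt_add_one l)] with t ht
    have h1 : ‖x t - z‖ ≤ |l| + 2 := by
      nlinarith [norm_nonneg (x t - z), le_abs_self l, abs_nonneg l]
    calc ‖x t‖ = ‖(x t - z) + z‖ := by simp
      _ ≤ _ := norm_add_le _ _
      _ ≤ _ := by linarith
  have hw := weak_limit x _ hb
  obtain ⟨p, hp⟩ := hw (Ultrafilter.of atTop) (Ultrafilter.of_le _)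
  have hpS := hcl _ _ (Ultrafilter.of_le _) hp
  refine ⟨p, hpS, fun y => ?_⟩
  rw [tendsto_iff_ultrafilter]
  intro U hU
  obtain ⟨q, hq⟩ := hw U hU
  have hqS := hcl _ _ hU hq
  suffices p = q by rw [this]; exact hq y
  obtain ⟨a, ha⟩ := hlim p hpS
  obtain ⟨b, hb⟩ := hlim q hqS
  have hk : Tendsto (fun t => ⟪x t, p - q⟫) atTop (𝓝 ((‖p‖^2 - ‖q‖^2 - (a - b)) / 2)) := by
    refine (((tendsto_const_nhds (x := ‖p‖^2 - ‖q‖^2)).sub (ha.sub hb)).div_const 2).congr ?_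
    intro t
    rw [norm_sub_sq_real, norm_sub_sq_real, inner_sub_right]; ring
  have e1 := tendsto_nhds_unique (hp (p - q)) (hk.mono_left (Ultrafilter.of_le _))
  have e2 := tendsto_nhds_unique (hq (p - q)) (hk.mono_left hU)
  have : ⟪p - q, p - q⟫ = 0 := by rw [inner_sub_left, e1, e2, sub_self]
  exact sub_eq_zero.1 (inner_self_eq_zero.1 this)

/-- The Lyapunov function. -/
noncomputable def En (α β l m : ℝ) (Φ : H → ℝ) (z : H) (x x' : ℝ → H) (t : ℝ) : ℝ :=
  t * (t - β * (l + 2 - α)) * (Φ (x t) - m)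
    + 1 / 2 * ⟪l • (x t - z) + t • (x' t + β • gradient Φ (x t)),
        l • (x t - z) + t • (x' t + β • gradient Φ (x t))⟫
    + l * (α - l - 1) / 2 * ⟪x t - z, x t - z⟫

theorem hasDerivAt_phi {Φ : H → ℝ} (hd : Differentiable ℝ Φ) {x : ℝ → H} {v : H} {t : ℝ}
    (hx : HasDerivAt x v t) : HasDerivAt (fun t => Φ (x t)) ⟪gradient Φ (x t), v⟫ t := by
  have := (hd (x t)).hasFDerivAt.comp_hasDerivAt t hx
  have e : ⟪gradient Φ (x t), v⟫ = fderiv ℝ Φ (x t) v := by simp [gradient]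
  rw [e]; exact this

theorem grad_diff {Φ : H → ℝ} (hΦ : ContDiff ℝ 2 Φ) : Differentiable ℝ (gradient Φ) := by
  have h : ContDiff ℝ 1 (fderiv ℝ Φ) := hΦ.fderiv_right (by norm_num)
  have h2 := h.differentiable (by norm_num)
  intro p
  exact ((InnerProductSpace.toDual ℝ H).symm.toContinuousLinearEquiv.differentiableAt).comp p (h2 p)

theorem En_deriv {α β t₀ : ℝ} (l m : ℝ) (ht₀ : 0 < t₀)
    {Φ : H → ℝ} (hΦ : ContDiff ℝ 2 Φ) (z : H)
    {x x' x'' : ℝ → H} (hsol : IsDINAVDSolution α β t₀ Φ x x' x'') (t : ℝ) (ht : t₀ ≤ t) :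
    HasDerivAt (En α β l m Φ z x x')
      ((2 * t - β * (l + 2 - α)) * (Φ (x t) - m)
        - l * (t - β) * ⟪x t - z, gradient Φ (x t)⟫
        - t * (α - 1 - l) * ⟪x' t, x' t⟫
        - β * t * (t - β) * ⟪gradient Φ (x t), gradient Φ (x t)⟫) t := by
  obtain ⟨h1, h2, -, h4⟩ := hsol
  have ht0 : t ≠ 0 := by linarith
  have hx := h1 t ht
  have hx' := h2 t ht
  have hg := (grad_diff hΦ (x t)).hasFDerivAt.comp_hasDerivAt t hx
  have hP := hasDerivAt_phi (hΦ.differentiable (by norm_num)) hx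
  have hA := hx.sub_const z
  have ht' := hasDerivAt_id t
  have hW := hx'.add (hg.const_smul β)
  have hv := (hA.const_smul l).add (ht'.smul hW)
  have hE := (((ht'.mul (ht'.sub_const (β * (l + 2 - α)))).mul (hP.sub_const m)).add
    ((hv.inner ℝ hv).const_mul (1/2))).add ((hA.inner ℝ hA).const_mul (l * (α - l - 1) / 2))
  refine hE.congr_deriv ?_
  have e : x'' t + β • (fderiv ℝ (gradient Φ) (x t)) (x' t)
      = - ((α / t) • x' t) - gradient Φ (x t) := by
    rw [← sub_eq_zero, ← h4 t ht]; abel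
  simp only [Pi.add_apply, Pi.smul_apply, Pi.mul_apply, id, Function.comp, e,
    Pi.smul_apply', one_smul]
  generalize x t - z = A
  generalize gradient Φ (x t) = g
  generalize x' t = V
  simp only [inner_add_left, inner_add_right, inner_smul_left, inner_smul_right,
    inner_sub_left, inner_sub_right, inner_neg_left, inner_neg_right, conj_trivial,
    smul_add, smul_sub, smul_neg]
  rw [real_inner_comm A V, real_inner_comm A g, real_inner_comm V g]
  field_simp
  ring

theorem En_props {α β t₀ l : ℝ} (hα : 3 < α) (hβ : 0 < β) (ht₀ : 0 < t₀) (hl : 2 < l)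
    (hl' : l < α - 1)
    {Φ : H → ℝ} (hconv : ConvexOn ℝ Set.univ Φ) (hΦ : ContDiff ℝ 2 Φ) {z : H}
    (hz : ∀ w, Φ z ≤ Φ w)
    {x x' x'' : ℝ → H} (hsol : IsDINAVDSolution α β t₀ Φ x x' x'')
    (G : ℝ → ℝ) (hG0 : ∀ t ≥ t₀, 0 ≤ G t)
    (hG : ∀ t ≥ t₀, HasDerivAt G ⟪x t - z, gradient Φ (x t)⟫ t) :
    (∃ a, Tendsto (En α β l (Φ z) Φ z x x') atTop (𝓝 a)) ∧ (∃ a, Tendsto G atTop (𝓝 a)) ∧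
    Tendsto (fun t => t * (Φ (x t) - Φ z)) atTop (𝓝 0) := by
  set T := max t₀ (max β ((β * (α - 2) + 1) / (l - 2))) with hTdef
  have hT1 : t₀ ≤ T := le_max_left _ _
  have hT2 : β ≤ T := (le_max_left _ _).trans (le_max_right _ _)
  have hT3 : (β * (α - 2) + 1) / (l - 2) ≤ T := (le_max_right _ _).trans (le_max_right _ _)
  rw [div_le_iff₀ (by linarith)] at hT3
  have hc : β * (l + 2 - α) < β := by nlinarith
  have hEpos : ∀ t ≥ T, t * (t - β * (l + 2 - α)) * (Φ (x t) - Φ z) ≤ En α β l (Φ z) Φ z x x' t := by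
    intro t ht
    unfold En
    have h1 : 0 ≤ l * (α - l - 1) / 2 := by
      have : 0 < l * (α - l - 1) := mul_pos (by linarith) (by linarith)
      linarith
    have h2 := mul_nonneg h1 (real_inner_self_nonneg (x := x t - z))
    have h3 := real_inner_self_nonneg (x := l • (x t - z) + t • (x' t + β • gradient Φ (x t)))
    linarith
  have hEnn : ∀ t ≥ T, 0 ≤ En α β l (Φ z) Φ z x x' t := by
    intro t ht
    refine le_trans ?_ (hEpos t ht)
    exact mul_nonneg (mul_nonneg (by linarith) (by linarith)) (by linarith [hz (x t)])
  have hD := fun t (ht : t ≥ T) => En_deriv (α := α) (β := β) l (Φ z) ht₀ hΦ z hsol t (hT1.trans ht)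
  have hDle : ∀ t ≥ T, ((2 * t - β * (l + 2 - α)) * (Φ (x t) - Φ z)
        - l * (t - β) * ⟪x t - z, gradient Φ (x t)⟫
        - t * (α - 1 - l) * ⟪x' t, x' t⟫
        - β * t * (t - β) * ⟪gradient Φ (x t), gradient Φ (x t)⟫)
        ≤ - ⟪x t - z, gradient Φ (x t)⟫ ∧ 0 ≤ ⟪x t - z, gradient Φ (x t)⟫ := by
    intro t ht
    have hgi := grad_ineq hconv (hΦ.differentiable (by norm_num)) (x t) z
    have hw : Φ (x t) - Φ z ≤ ⟪x t - z, gradient Φ (x t)⟫ := by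
      rw [← neg_sub (x t) z, inner_neg_right, real_inner_comm] at hgi
      linarith
    have hφ : 0 ≤ Φ (x t) - Φ z := by linarith [hz (x t)]
    generalize ⟪x t - z, gradient Φ (x t)⟫ = w at *
    have ht0 : 0 < t := by linarith
    have a1 : 0 ≤ t * (α - 1 - l) * ⟪x' t, x' t⟫ :=
      mul_nonneg (mul_nonneg ht0.le (by linarith)) real_inner_self_nonneg
    have a2 : 0 ≤ β * t * (t - β) * ⟪gradient Φ (x t), gradient Φ (x t)⟫ :=
      mul_nonneg (mul_nonneg (by positivity) (by linarith)) real_inner_self_nonneg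
    have a3 : (2 * t - β * (l + 2 - α)) * (Φ (x t) - Φ z) ≤ (2 * t - β * (l + 2 - α)) * w :=
      mul_le_mul_of_nonneg_left hw (by linarith)
    have a4 : β * (α - 2) + 1 ≤ t * (l - 2) := by
      refine hT3.trans (mul_le_mul_of_nonneg_right ht (by linarith))
    have hw0 : 0 ≤ w := hφ.trans hw
    have a5 := mul_le_mul_of_nonneg_right a4 hw0
    refine ⟨?_, hw0⟩
    linarith
  have hanti := antitone_of_deriv hD (fun t ht => by linarith [hDle t ht])
  have hanti2 := antitone_of_deriv (fun t ht => (hD t ht).add (hG t (hT1.trans ht)))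
    (fun t ht => by linarith [hDle t ht])
  obtain ⟨a, ha⟩ := antitone_tendsto hanti hEnn
  obtain ⟨b, hb⟩ := antitone_tendsto hanti2 (B := 0)
    (fun t ht => add_nonneg (hEnn t ht) (hG0 t (hT1.trans ht)))
  refine ⟨⟨a, ha⟩, ⟨b - a, (hb.sub ha).congr fun t => ?_⟩, ?_⟩
  · simp
  · have hlim : Tendsto (fun t : ℝ => En α β l (Φ z) Φ z x x' T / (t - β * (l + 2 - α)))
        atTop (𝓝 0) :=
      tendsto_const_nhds.div_atTop (tendsto_atTop_add_const_right _ _ tendsto_id)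
    refine tendsto_of_tendsto_of_tendsto_of_le_of_le' tendsto_const_nhds hlim ?_ ?_
    · filter_upwards [eventually_ge_atTop T] with t ht
      exact mul_nonneg (by linarith) (by linarith [hz (x t)])
    · filter_upwards [eventually_gt_atTop T] with t ht
      rw [le_div_iff₀ (by linarith)]
      have h1 := hEpos t ht.le
      have h2 := hanti (Set.mem_Ici.2 le_rfl) ht.le ht.le
      linarith

theorem main_z {α β t₀ : ℝ} (hα : 3 < α) (hβ : 0 < β) (ht₀ : 0 < t₀)
    {Φ : H → ℝ} (hconv : ConvexOn ℝ Set.univ Φ) (hΦ : ContDiff ℝ 2 Φ) {z : H}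
    (hz : ∀ w, Φ z ≤ Φ w)
    {x x' x'' : ℝ → H} (hsol : IsDINAVDSolution α β t₀ Φ x x' x'') :
    (∃ a, Tendsto (fun t => ‖x t - z‖ ^ 2) atTop (𝓝 a)) ∧
    Tendsto (fun t => Φ (x t)) atTop (𝓝 (Φ z)) := by
  have hdΦ : Differentiable ℝ Φ := hΦ.differentiable (by norm_num)
  set w : ℝ → ℝ := fun t => ⟪x t - z, gradient Φ (x t)⟫ with hw
  have hw0 : ∀ t, 0 ≤ w t := by
    intro t
    have hgi := grad_ineq hconv hdΦ (x t) z
    rw [← neg_sub (x t) z, inner_neg_right, real_inner_comm] at hgi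
    have := hz (x t)
    simp only [hw]; linarith
  have hxc : Continuous (fun t => x (max t t₀)) := by
    have : ContinuousOn x (Set.Ici t₀) := fun t ht => (hsol.1 t ht).continuousAt.continuousWithinAt
    exact this.comp_continuous (by fun_prop) (fun t => Set.mem_Ici.2 (le_max_right _ _))
  have hgc : Continuous (gradient Φ) := (grad_diff hΦ).continuous
  have hWc : Continuous (fun t => w (max t t₀)) :=
    (hxc.sub continuous_const).inner (hgc.comp hxc)
  set G : ℝ → ℝ := fun t => ∫ s in t₀..t, w (max s t₀) with hGdef
  have hG : ∀ t ≥ t₀, HasDerivAt G (w t) t := by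
    intro t ht
    have := intervalIntegral.integral_hasDerivAt_right (hWc.intervalIntegrable t₀ t)
      (hWc.stronglyMeasurableAtFilter _ _) hWc.continuousAt
    rwa [max_eq_left ht] at this
  have hG0 : ∀ t ≥ t₀, 0 ≤ G t := fun t ht =>
    intervalIntegral.integral_nonneg ht (fun s _ => hw0 _)
  set l := 2 + (α - 3) / 2 with hl
  set μ := 2 + (α - 3) / 3 with hμ
  obtain ⟨⟨a, ha⟩, ⟨b, hb⟩, h0⟩ := En_props (l := l) hα hβ ht₀ (by linarith) (by linarith)
    hconv hΦ hz hsol G hG0 hG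
  obtain ⟨⟨c, hc⟩, -, -⟩ := En_props (l := μ) hα hβ ht₀ (by linarith) (by linarith)
    hconv hΦ hz hsol G hG0 hG
  have hne : l - μ ≠ 0 := by
    have : l - μ = (α - 3) / 6 := by rw [hl, hμ]; ring
    rw [this]; have : 0 < (α - 3) / 6 := by linarith
    exact this.ne'
  constructor
  · have hq : ∀ t ≥ t₀, HasDerivAt (fun t => 1 / 2 * ⟪x t - z, x t - z⟫ + β * G t)
        (⟪x t - z, x' t⟫ + β * w t) t := by
      intro t ht
      have hA := (hsol.1 t ht).sub_const z
      refine (((hA.inner ℝ hA).const_mul (1/2)).add ((hG t ht).const_mul β)).congr_deriv ?_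
      rw [real_inner_comm (x t - z) (x' t)]; ring
    have hlim := ((((ha.sub hc).div_const (l - μ)).add (h0.const_mul β)).add
      (hb.const_mul ((α - 1) * β)))
    have hq2 := avg_tendsto (a := α - 1) (by linarith) _ _ hq (hlim.congr fun t => by
      have : En α β l (Φ z) Φ z x x' t - En α β μ (Φ z) Φ z x x' t
          = (l - μ) * (- β * (t * (Φ (x t) - Φ z)) + t * ⟪x t - z, x' t⟫ + t * β * w t
            + (α - 1) / 2 * ⟪x t - z, x t - z⟫) := by
        simp only [En, hw]
        clear_value l μ
        generalize x t - z = A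
        generalize gradient Φ (x t) = g
        generalize x' t = V
        simp only [inner_add_left, inner_add_right, inner_smul_left, inner_smul_right,
          conj_trivial, smul_add]
        rw [real_inner_comm A V, real_inner_comm A g, real_inner_comm V g]
        ring
      rw [this, mul_div_cancel_left₀ _ hne]
      ring)
    refine ⟨_, ((hq2.sub (hb.const_mul β)).const_mul 2).congr fun t => ?_⟩
    rw [← real_inner_self_eq_norm_sq]; ring
  · have : Tendsto (fun t => Φ (x t) - Φ z) atTop (𝓝 0) := by
      refine tendsto_of_tendsto_of_tendsto_of_le_of_le' tendsto_const_nhds h0 ?_ ?_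
      · exact Eventually.of_forall fun t => by linarith [hz (x t)]
      · filter_upwards [eventually_ge_atTop 1] with t ht
        have := hz (x t)
        nlinarith
    simpa using this.add_const (Φ z)

theorem stmt9 (α β t₀ : ℝ) (hα : 3 < α) (hβ : 0 < β) (ht₀ : 0 < t₀)
    (Φ : H → ℝ) (hconv : ConvexOn ℝ Set.univ Φ) (hΦ : ContDiff ℝ 2 Φ)
    (hne : ∃ z : H, ∀ w, Φ z ≤ Φ w)
    (x x' x'' : ℝ → H) (hsol : IsDINAVDSolution α β t₀ Φ x x' x'') :
    ∃ xinf : H, (∀ w, Φ xinf ≤ Φ w) ∧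
      ∀ y : H, Tendsto (fun t => ⟪x t, y⟫) atTop (𝓝 ⟪xinf, y⟫) := by
  obtain ⟨z, hz⟩ := hne
  have hmem := opial x {p | ∀ w, Φ p ≤ Φ w} ⟨z, hz⟩
    (fun p hp => (main_z hα hβ ht₀ hconv hΦ hp hsol).1) ?_
  · obtain ⟨p, hp, h⟩ := hmem
    exact ⟨p, hp, h⟩
  · intro U p hU hp w
    refine le_trans ?_ (hz w)
    have h1 := (main_z hα hβ ht₀ hconv hΦ hz hsol).2.mono_left hU
    have h2 : Tendsto (fun t => Φ p + ⟪gradient Φ p, x t - p⟫) U (𝓝 (Φ p)) := by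
      have := ((hp (gradient Φ p)).sub_const ⟪p, gradient Φ p⟫).const_add (Φ p)
      rw [sub_self, add_zero] at this
      refine this.congr fun t => ?_
      rw [← inner_sub_left, real_inner_comm]
    exact le_of_tendsto_of_tendsto' h2 h1
      (fun t => grad_ineq hconv (hΦ.differentiable (by norm_num)) p (x t))
end

section
/- Let α > 3, β > 0, t₀ > 0, let Φ : H → ℝ be convex, twice continuously differentiable and even (Φ(−z) = Φ(z) for all z ∈ H), and let x : [t₀, ∞) → H be a solution of (DIN-AVD). Then there exists x* ∈ argmin Φ such that x(t) converges strongly to x* as t → ∞, i.e., ‖x(t) − x*‖ → 0. -/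
open Filter MeasureTheory Set
open scoped Topology RealInnerProductSpace

variable {H : Type*} [NormedAddCommGroup H] [InnerProductSpace ℝ H] [CompleteSpace H]

theorem aux_anti {F F' : ℝ → ℝ} {a b : ℝ} (hab : a ≤ b)
    (hF : ∀ t ∈ Icc a b, HasDerivAt F (F' t) t) (hn : ∀ t ∈ Icc a b, F' t ≤ 0) : F b ≤ F a := by
  have h : AntitoneOn F (Icc a b) := by
    apply antitoneOn_of_hasDerivWithinAt_nonpos (f' := F') (convex_Icc a b)
    · intro t ht
      exact (hF t ht).continuousAt.continuousWithinAt
    · intro t ht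
      exact (hF t (interior_subset ht)).hasDerivWithinAt
    · intro t ht
      exact hn t (interior_subset ht)
  exact h (left_mem_Icc.2 hab) (right_mem_Icc.2 hab) hab

theorem aux_conv {F : ℝ → ℝ} {T m : ℝ} (hF : ∀ a b, T ≤ a → a ≤ b → F b ≤ F a)
    (hm : ∀ t, T ≤ t → m ≤ F t) : ∃ l, Tendsto F atTop (𝓝 l) := by
  have h1 : Antitone (fun t => F (max T t)) := by
    intro a b hab
    exact hF _ _ (le_max_left _ _) (max_le_max le_rfl hab)
  have h2 : BddBelow (range (fun t => F (max T t))) := by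
    refine ⟨m, ?_⟩
    rintro _ ⟨t, rfl⟩
    exact hm _ (le_max_left _ _)
  refine ⟨_, (tendsto_atTop_ciInf h1 h2).congr' ?_⟩
  filter_upwards [eventually_ge_atTop T] with t ht
  simp [max_eq_right ht]

theorem aux_grad {Φ : H → ℝ} (hconv : ConvexOn ℝ Set.univ Φ) (hd : Differentiable ℝ Φ) (y z : H) :
    Φ y + ⟪gradient Φ y, z - y⟫ ≤ Φ z := by
  have hl : ConvexOn ℝ Set.univ (Φ ∘ (AffineMap.lineMap y z : ℝ →ᵃ[ℝ] H)) := by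
    simpa using hconv.comp_affineMap (AffineMap.lineMap y z : ℝ →ᵃ[ℝ] H)
  have hder : HasDerivAt (Φ ∘ (AffineMap.lineMap y z : ℝ →ᵃ[ℝ] H)) ⟪gradient Φ y, z - y⟫ 0 := by
    have h1 : HasDerivAt (AffineMap.lineMap y z : ℝ → H) (z - y) 0 := AffineMap.hasDerivAt_lineMap
    have h2 : HasFDerivAt Φ (fderiv ℝ Φ y) ((AffineMap.lineMap y z : ℝ → H) 0) := by
      simpa using (hd y).hasFDerivAt
    have h3 := h2.comp_hasDerivAt (0:ℝ) h1
    have h4 : fderiv ℝ Φ y (z - y) = ⟪gradient Φ y, z - y⟫ := by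
      simp [gradient]
    rwa [h4] at h3
  have := hl.le_slope_of_hasDerivAt (mem_univ 0) (mem_univ 1) one_pos hder
  generalize ⟪gradient Φ y, z - y⟫ = r at this ⊢
  simp [slope_def_field] at this
  linarith

theorem aux_hess {x g : ℝ → H} {x' g' : H} {t : ℝ} (hx : HasDerivAt x x' t)
    (hg : HasDerivAt g g' t) (hm : ∀ s, 0 ≤ ⟪g s - g t, x s - x t⟫) : 0 ≤ ⟪g', x'⟫ := by
  have h1 := hasDerivAt_iff_tendsto_slope.1 hx
  have h2 := hasDerivAt_iff_tendsto_slope.1 hg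
  refine ge_of_tendsto' (h2.inner h1) ?_
  intro s
  simp only [slope, vsub_eq_sub, real_inner_smul_left, real_inner_smul_right]
  rw [← mul_assoc]
  exact mul_nonneg (mul_self_nonneg _) (hm s)

theorem aux_E_deriv {α β lam t : ℝ} {x p v g : ℝ → H} {p' : H} {f : ℝ → ℝ} 
    (hx : HasDerivAt x (v t) t) (hp : HasDerivAt p p' t)
    (hf : HasDerivAt f ⟪g t, v t⟫ t)
    (hpt : p t = v t + β • g t)
    (hpp : t • p' = -(α • v t) - t • g t) :
    HasDerivAt (fun t => (t^2 * f t + t^2 * ⟪p t, p t⟫ / 2 + (α-2)*β*t*f t) +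
      lam * (t * ⟪x t, p t⟫ + (α-1)/2 * ⟪x t, x t⟫ - β * t * f t))
      ((2*t+(α-2)*β) * f t - (α-1)*t*⟪v t, v t⟫ - t*β*(t-β)*⟪g t, g t⟫
        + lam * (t * ⟪v t, v t⟫ + (β - t) * ⟪g t, x t⟫ - β * f t)) t := by
  have hid := hasDerivAt_id t
  have h := (((hid.pow 2).mul hf).add ((((hid.pow 2).mul (hp.inner ℝ hp)).div_const 2))).add
    ((hid.const_mul ((α-2)*β)).mul hf)
  have h' := (((hid.mul (hx.inner ℝ hp)).add ((hx.inner ℝ hx).const_mul ((α-1)/2))).sub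
    ((hid.const_mul β).mul hf)).const_mul lam
  refine (h.add h').congr_deriv ?_
  have e1 : t * ⟪x t, p'⟫ = -(α * ⟪x t, v t⟫) - t * ⟪g t, x t⟫ := by
    rw [← real_inner_smul_right, hpp, inner_sub_right, inner_neg_right, real_inner_smul_right,
      real_inner_smul_right, real_inner_comm (x t) (g t)]
  have e2 : t * ⟪p t, p'⟫ = -(α * ⟪p t, v t⟫) - t * ⟪p t, g t⟫ := by
    rw [← real_inner_smul_right, hpp, inner_sub_right, inner_neg_right, real_inner_smul_right,
      real_inner_smul_right]
  have e3 : ⟪p', p t⟫ = ⟪p t, p'⟫ := real_inner_comm _ _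
  have e4 : ⟪v t, x t⟫ = ⟪x t, v t⟫ := real_inner_comm _ _
  have e5 : ⟪v t, g t⟫ = ⟪g t, v t⟫ := real_inner_comm _ _
  have e7 : ⟪x t, g t⟫ = ⟪g t, x t⟫ := real_inner_comm _ _
  simp only [hpt, inner_add_left, inner_add_right, real_inner_smul_left,
    real_inner_smul_right, e5, e4, e7] at e1 e2 e3 ⊢
  simp only [Pi.pow_apply, id]
  rw [e3]
  linear_combination lam * e1 + t * e2

theorem aux_E_bound {α β lam : ℝ} (hα : 3 < α) (hβ : 0 < β) (h2 : 2 < lam) (h3 : lam < α - 1) :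
    ∃ c > 0, ∃ T, ∀ t ≥ T, ∀ f V G I : ℝ, 0 ≤ f → 0 ≤ V → 0 ≤ G → f ≤ I →
      (2*t+(α-2)*β) * f - (α-1)*t*V - t*β*(t-β)*G + lam * (t * V + (β - t) * I - β * f)
      ≤ -(c * t * (f + V + t * G)) := by
  refine ⟨min ((lam-2)/2) (min (α-1-lam) (β/2)), by
    refine lt_min (by linarith) (lt_min (by linarith) (by linarith)),
    max (2*β) (2*((α-2)*β)/(lam-2)), ?_⟩
  intro t ht f V G I hf hV hG hI
  have ht1 : 2*β ≤ t := le_trans (le_max_left _ _) ht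
  have ht2 : 2*((α-2)*β)/(lam-2) ≤ t := le_trans (le_max_right _ _) ht
  rw [div_le_iff₀ (by linarith)] at ht2
  set c := min ((lam-2)/2) (min (α-1-lam) (β/2)) with hc
  have c1 : c ≤ (lam-2)/2 := min_le_left _ _
  have c2 : c ≤ α-1-lam := (min_le_right _ _).trans (min_le_left _ _)
  have c3 : c ≤ β/2 := (min_le_right _ _).trans (min_le_right _ _)
  have ht0 : 0 < t := by linarith
  have hlam : 0 < lam := by linarith
  have i1 : lam * (t-β) * f ≤ lam * (t-β) * I := 
    mul_le_mul_of_nonneg_left hI (mul_nonneg hlam.le (by linarith))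
  have i2 : c * (t * V) ≤ (α-1-lam) * (t*V) := mul_le_mul_of_nonneg_right c2 (by positivity)
  have i3 : c * (t*t*G) ≤ β/2 * (t*t*G) := mul_le_mul_of_nonneg_right c3 (by positivity)
  have i3' : β * t * G * (2*β) ≤ β*t*G*t := mul_le_mul_of_nonneg_left ht1 (by positivity)
  have i4 : c * (t * f) ≤ (lam-2)/2 * (t*f) := mul_le_mul_of_nonneg_right c1 (by positivity)
  have i4' : 2*((α-2)*β) * f ≤ t * (lam-2) * f := mul_le_mul_of_nonneg_right ht2 hf
  nlinarith

theorem aux_E_lower {α β lam t f : ℝ} {x p : H} (hβ : 0 < β) (ht : β ≤ t)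
    (hf : 0 ≤ f) (h3 : lam < α - 1) :
    lam * (α-1-lam)/2 * ⟪x, x⟫ ≤ (t^2 * f + t^2 * ⟪p, p⟫ / 2 + (α-2)*β*t*f) +
      lam * (t * ⟪x, p⟫ + (α-1)/2 * ⟪x, x⟫ - β * t * f) := by
  have h : 0 ≤ ⟪lam • x + t • p, lam • x + t • p⟫ := real_inner_self_nonneg
  simp only [inner_add_left, inner_add_right, real_inner_smul_left, real_inner_smul_right,
    real_inner_comm x p] at h
  have h1 : 0 ≤ t * f * (t - β) := by
    have : 0 ≤ t := by linarith
    have : 0 ≤ t - β := by linarith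
    positivity
  have h2 : 0 ≤ (α - 1 - lam) * (β * t * f) := by
    have : 0 ≤ t := by linarith
    have : 0 ≤ α - 1 - lam := by linarith
    positivity
  nlinarith

theorem aux_log {Q E E' : ℝ → ℝ} {T c m l : ℝ} (hc : 0 < c)
    (hE : ∀ t ≥ T, HasDerivAt E (E' t) t) (hb : ∀ t ≥ T, E' t ≤ -(c * (Q t / t)))
    (hm : ∀ t ≥ T, m ≤ E t) (hQ : Tendsto Q atTop (𝓝 l)) : l ≤ 0 := by
  by_contra hl
  push Not at hl
  have h1 : ∀ᶠ t in atTop, l/2 < Q t := hQ.eventually (lt_mem_nhds (by linarith))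
  obtain ⟨S, hS⟩ := eventually_atTop.1 (h1.and ((eventually_ge_atTop T).and (eventually_gt_atTop 0)))
  have key : ∀ t ≥ S, E t + c * (l/2) * Real.log t ≤ E S + c * (l/2) * Real.log S := by
    intro t ht
    apply aux_anti (F := fun t => E t + c * (l/2) * Real.log t)
      (F' := fun t => E' t + c * (l/2) * t⁻¹) ht
    · intro u hu
      have := hS u hu.1
      exact (hE u this.2.1).add ((Real.hasDerivAt_log this.2.2.ne').const_mul _)
    · intro u hu
      obtain ⟨a1, a2, a3⟩ := hS u hu.1
      have := hb u a2
      have h5 : c * (l/2) * u⁻¹ ≤ c * (Q u / u) := by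
        rw [div_eq_mul_inv (Q u), mul_assoc]
        gcongr
      linarith
  have ht : Tendsto (fun t => c * (l/2) * Real.log t) atTop atTop :=
    Real.tendsto_log_atTop.const_mul_atTop (by positivity)
  obtain ⟨t, h2, h3⟩ := ((ht.eventually (eventually_gt_atTop
    (E S + c * (l/2) * Real.log S - m))).and (eventually_ge_atTop S)).exists
  have := key t h3
  have := hm t (hS t h3).2.1
  linarith

theorem aux_Z {α β t : ℝ} {x p v g : ℝ → H} {p' y : H} 
    (hx : HasDerivAt x (v t) t) (hp : HasDerivAt p p' t)
    (hpt : p t = v t + β • g t)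
    (hpp : t • p' = -(α • v t) - t • g t) :
    HasDerivAt (fun t => t * ⟪p t, x t + y⟫ + (α-1) * (⟪x t, x t⟫ - ⟪y, y⟫
        - ⟪x t - y, x t - y⟫ / 2))
      (-(t - β) * ⟪g t, x t + y⟫ + t * ⟪v t, v t⟫ + t * β * ⟪g t, v t⟫) t := by
  have hid := hasDerivAt_id t
  have h := (hid.mul (hp.inner ℝ (hx.add_const y))).add
    ((((hx.inner ℝ hx).sub_const ⟪y, y⟫).sub
      (((hx.sub_const y).inner ℝ (hx.sub_const y)).div_const 2)).const_mul (α-1))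
  refine h.congr_deriv ?_
  have e1 : t * ⟪p', x t + y⟫ = -(α * ⟪v t, x t + y⟫) - t * ⟪g t, x t + y⟫ := by
    rw [← real_inner_smul_left, hpp, inner_sub_left, inner_neg_left, real_inner_smul_left,
      real_inner_smul_left]
  have e4 : ⟪x t, v t⟫ = ⟪v t, x t⟫ := real_inner_comm _ _
  have e5 : ⟪y, v t⟫ = ⟪v t, y⟫ := real_inner_comm _ _
  simp only [hpt, inner_add_left, inner_add_right, inner_sub_left, inner_sub_right,
    real_inner_smul_left, real_inner_smul_right, e5, e4, id] at e1 ⊢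
  linear_combination e1

theorem aux_cauchy {x : ℝ → H} {U W : ℝ → ℝ} {T k u : ℝ} (hk : 0 < k)
    (hD : ∀ t s, T ≤ t → t ≤ s → k * ‖x t - x s‖^2 ≤ U t - W s)
    (hU : Tendsto U atTop (𝓝 u)) (hW : Tendsto W atTop (𝓝 u)) :
    ∃ y, Tendsto x atTop (𝓝 y) := by
  apply cauchySeq_tendsto_of_complete
  rw [Metric.cauchySeq_iff]
  intro ε hε
  have hd : 0 < k * ε^2 / 2 := by positivity
  have h1 : ∀ᶠ t in atTop, U t < u + k * ε^2/2 := hU.eventually (gt_mem_nhds (by linarith))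
  have h2 : ∀ᶠ t in atTop, u - k * ε^2/2 < W t := hW.eventually (lt_mem_nhds (by linarith))
  obtain ⟨S, hS⟩ := eventually_atTop.1 (h1.and (h2.and (eventually_ge_atTop T)))
  have main : ∀ t s, S ≤ t → t ≤ s → dist (x t) (x s) < ε := by
    intro t s ht hts
    obtain ⟨a1, a2, a3⟩ := hS t ht
    obtain ⟨b1, b2, b3⟩ := hS s (ht.trans hts)
    have := hD t s a3 hts
    have h3 : k * ‖x t - x s‖^2 < k * ε^2 := by linarith
    rw [dist_eq_norm]
    exact lt_of_pow_lt_pow_left₀ 2 hε.le (lt_of_mul_lt_mul_left h3 hk.le)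
  refine ⟨S, fun m hm n hn => ?_⟩
  rcases le_total m n with h | h
  · exact main m n hm h
  · rw [dist_comm]; exact main n m hn h

theorem aux_core (α β t₀ : ℝ) (hα : 3 < α) (hβ : 0 < β) (ht₀ : 0 < t₀)
    (x v a g g' : ℝ → H) (f : ℝ → ℝ)
    (hx : ∀ t ≥ t₀, HasDerivAt x (v t) t) (hv : ∀ t ≥ t₀, HasDerivAt v (a t) t)
    (hg : ∀ t ≥ t₀, HasDerivAt g (g' t) t) (hf : ∀ t ≥ t₀, HasDerivAt f ⟪g t, v t⟫ t)
    (hode : ∀ t ≥ t₀, a t + (α / t) • v t + β • g' t + g t = 0)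
    (hf0 : ∀ t, 0 ≤ f t) (hfx : ∀ t, f t ≤ ⟪g t, x t⟫)
    (hfs : ∀ t s, f t - f s ≤ ⟪g t, x t + x s⟫)
    (hmon : ∀ t ≥ t₀, 0 ≤ ⟪g' t, v t⟫) :
    ∃ y, Tendsto x atTop (𝓝 y) ∧ Tendsto f atTop (𝓝 0) := by
  obtain ⟨p, hpt⟩ : ∃ p : ℝ → H, ∀ t, p t = v t + β • g t := ⟨_, fun t => rfl⟩
  have hp : ∀ t ≥ t₀, HasDerivAt p (a t + β • g' t) t := by
    intro t ht
    rw [show p = fun t => v t + β • g t from funext hpt]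
    exact (hv t ht).add ((hg t ht).const_smul β)
  have hpp : ∀ t ≥ t₀, t • (a t + β • g' t) = -(α • v t) - t • g t := by
    intro t ht
    have h1 : t ≠ 0 := by linarith
    have h2 : a t + β • g' t = -((α/t) • v t) - g t := by
      rw [← sub_eq_zero, ← hode t ht]; abel
    rw [h2, smul_sub, smul_neg, smul_smul, mul_div_cancel₀ _ h1]
  obtain ⟨Q, hQ⟩ : ∃ Q : ℝ → ℝ, ∀ t, Q t = t^2 * f t + t^2 * ⟪p t, p t⟫ / 2 + (α-2)*β*t*f t :=
    ⟨_, fun t => rfl⟩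
  obtain ⟨N, hN⟩ : ∃ N : ℝ → ℝ, ∀ t, N t = t * ⟪x t, p t⟫ + (α-1)/2 * ⟪x t, x t⟫ - β * t * f t :=
    ⟨_, fun t => rfl⟩
  -- energy facts
  have hE : ∀ lam, 2 < lam → lam < α - 1 → ∃ c > 0, ∃ T ≥ max (max t₀ β) 1, ∃ E' : ℝ → ℝ,
      (∀ t ≥ T, HasDerivAt (fun t => Q t + lam * N t) (E' t) t) ∧
      (∀ t ≥ T, E' t ≤ -(c * t * (f t + ⟪v t, v t⟫ + t * ⟪g t, g t⟫))) ∧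
      (∀ t ≥ T, lam * (α-1-lam)/2 * ⟪x t, x t⟫ ≤ Q t + lam * N t) ∧
      (∀ a b, T ≤ a → a ≤ b → Q b + lam * N b ≤ Q a + lam * N a) ∧
      (∃ l, Tendsto (fun t => Q t + lam * N t) atTop (𝓝 l)) := by
    intro lam h2 h3
    obtain ⟨c, hc, T, hT⟩ := aux_E_bound hα hβ h2 h3
    have A1 : ∀ t ≥ max T (max (max t₀ β) 1), HasDerivAt (fun t => Q t + lam * N t) 
        ((2*t+(α-2)*β) * f t - (α-1)*t*⟪v t, v t⟫ - t*β*(t-β)*⟪g t, g t⟫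
        + lam * (t * ⟪v t, v t⟫ + (β - t) * ⟪g t, x t⟫ - β * f t)) t := by
      intro t ht
      simp only [ge_iff_le, max_le_iff] at ht
      have ht' : t₀ ≤ t := ht.2.1.1
      simp only [hQ, hN]
      exact aux_E_deriv (hx t ht') (hp t ht') (hf t ht') (hpt t) (hpp t ht')
    have A2 : ∀ t ≥ max T (max (max t₀ β) 1), 
        ((2*t+(α-2)*β) * f t - (α-1)*t*⟪v t, v t⟫ - t*β*(t-β)*⟪g t, g t⟫
        + lam * (t * ⟪v t, v t⟫ + (β - t) * ⟪g t, x t⟫ - β * f t)) ≤ 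
        -(c * t * (f t + ⟪v t, v t⟫ + t * ⟪g t, g t⟫)) := by
      intro t ht
      exact hT t ((le_max_left _ _).trans ht) _ _ _ _ (hf0 t) real_inner_self_nonneg
        real_inner_self_nonneg (hfx t)
    have A3 : ∀ t ≥ max T (max (max t₀ β) 1),
        lam * (α-1-lam)/2 * ⟪x t, x t⟫ ≤ Q t + lam * N t := by
      intro t ht
      simp only [ge_iff_le, max_le_iff] at ht
      rw [hQ, hN]
      exact aux_E_lower hβ ht.2.1.2 (hf0 t) h3
    have A4 : ∀ a b, max T (max (max t₀ β) 1) ≤ a → a ≤ b →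
        Q b + lam * N b ≤ Q a + lam * N a := by
      intro a b ha hab
      refine aux_anti (F := fun t => Q t + lam * N t) hab (fun t ht => A1 t (ha.trans ht.1)) ?_
      intro t ht
      have h4 := ha.trans ht.1
      refine (A2 t h4).trans ?_
      simp only [max_le_iff] at h4
      have h5 : 0 < t := by linarith
      have := hf0 t
      have h6 : 0 ≤ ⟪v t, v t⟫ := real_inner_self_nonneg
      have h7 : 0 ≤ ⟪g t, g t⟫ := real_inner_self_nonneg
      have : 0 ≤ (c * t * (f t + ⟪v t, v t⟫ + t * ⟪g t, g t⟫)) := by positivity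
      linarith
    refine ⟨c, hc, max T (max (max t₀ β) 1), le_max_right _ _, _, A1, A2, A3, A4, ?_⟩
    refine aux_conv (m := 0) A4 ?_
    intro t ht
    refine le_trans ?_ (A3 t ht)
    have h6 : 0 ≤ ⟪x t, x t⟫ := real_inner_self_nonneg
    have : 0 < lam := by linarith
    have : 0 < α - 1 - lam := by linarith
    positivity
  obtain ⟨_, _, _, _, _, _, _, _, _, l2, hl2⟩ := hE (2 + (α-3)/4) (by linarith) (by linarith)
  obtain ⟨lam, hlam⟩ : ∃ lam, lam = 2 + (α-3)/2 := ⟨_, rfl⟩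
  have hlamlo : 2 < lam := by linarith
  have hlamhi : lam < α - 1 := by linarith
  obtain ⟨c, hc, T, hT, E', hE1, hE2, hE3, hE4, l1, hl1⟩ := hE lam hlamlo hlamhi
  clear hE
  have hT' : ∀ t ≥ T, t₀ ≤ t ∧ β ≤ t ∧ 1 ≤ t := by
    intro t ht
    have := hT.le.trans ht
    simp only [max_le_iff] at this
    exact ⟨this.1.1, this.1.2, this.2⟩
  have hVV : ∀ t, 0 ≤ ⟪v t, v t⟫ := fun t => real_inner_self_nonneg
  have hGG : ∀ t, 0 ≤ ⟪g t, g t⟫ := fun t => real_inner_self_nonneg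
  have hPP : ∀ t, 0 ≤ ⟪p t, p t⟫ := fun t => real_inner_self_nonneg
  have hXX : ∀ t, 0 ≤ ⟪x t, x t⟫ := fun t => real_inner_self_nonneg
  have hGV : ∀ t, 2 * ⟪g t, v t⟫ ≤ ⟪g t, g t⟫ + ⟪v t, v t⟫ := by
    intro t
    have : 0 ≤ ⟪g t - v t, g t - v t⟫ := real_inner_self_nonneg
    simp only [inner_sub_left, inner_sub_right, real_inner_comm (g t) (v t)] at this
    linarith [real_inner_comm (g t) (v t)]
  have hPle : ∀ t, ⟪p t, p t⟫ ≤ 2 * ⟪v t, v t⟫ + 2 * β^2 * ⟪g t, g t⟫ := by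
    intro t
    have : 0 ≤ ⟪v t - β • g t, v t - β • g t⟫ := real_inner_self_nonneg
    simp only [hpt, inner_sub_left, inner_sub_right, inner_add_left, inner_add_right,
      real_inner_smul_left, real_inner_smul_right] at this ⊢
    nlinarith
  -- limits of N and Q
  have hNl : ∃ n, Tendsto N atTop (𝓝 n) := by
    refine ⟨_, ((hl1.sub hl2).div_const ((α-3)/4)).congr ?_⟩
    intro t
    have : α - 3 ≠ 0 := by linarith
    rw [hlam]
    field_simp
    ring
  obtain ⟨n, hn⟩ := hNl
  have hQl : Tendsto Q atTop (𝓝 (l1 - lam * n)) :=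
    (hl1.sub (hn.const_mul lam)).congr (fun t => by ring)
  have hQ0 : ∀ t ≥ T, 0 ≤ Q t := by
    intro t ht
    have := hT' t ht
    have h5 : 0 ≤ t := by linarith
    have := hf0 t
    have := hPP t
    have : 0 ≤ α - 2 := by linarith
    rw [hQ]; positivity
  have hCpos : 0 < 2 + (α-2)*β + β^2 := by
    have : 0 ≤ α - 2 := by linarith
    positivity
  have hQle : ∀ t ≥ T, Q t / t ≤ (2 + (α-2)*β + β^2) * (t * (f t + ⟪v t, v t⟫ + t * ⟪g t, g t⟫)) := by
    intro t ht
    obtain ⟨_, _, h1⟩ := hT' t ht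
    have h0 : 0 < t := by linarith
    have hα2 : 0 ≤ α - 2 := by linarith
    rw [div_le_iff₀ h0, hQ]
    have F := hf0 t
    have V := hVV t
    have G := hGG t
    have e1 : t^2 * ⟪p t, p t⟫ ≤ t^2 * (2 * ⟪v t, v t⟫ + 2 * β^2 * ⟪g t, g t⟫) :=
      mul_le_mul_of_nonneg_left (hPle t) (by positivity)
    have e2 : (α-2)*β*f t * t * 1 ≤ (α-2)*β*f t * t * t :=
      mul_le_mul_of_nonneg_left h1 (by positivity)
    have e3 : β^2 * ⟪g t, g t⟫ * t^2 * 1 ≤ β^2 * ⟪g t, g t⟫ * t^2 * t :=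
      mul_le_mul_of_nonneg_left h1 (by positivity)
    have r1 : 0 ≤ (1 + β^2) * t^2 * f t := by positivity
    have r2 : 0 ≤ (1 + (α-2)*β + β^2) * t^2 * ⟪v t, v t⟫ := by positivity
    have r3 : 0 ≤ (2 + (α-2)*β) * t^3 * ⟪g t, g t⟫ := by positivity
    linarith
  have hQz : Tendsto Q atTop (𝓝 0) := by
    have h1 : l1 - lam * n ≤ 0 := by
      refine aux_log (Q := Q) (E := fun t => Q t + lam * N t) (E' := E') (T := T) (m := 0)
        (c := c / (2 + (α-2)*β + β^2)) (by positivity) hE1 ?_ ?_ hQl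
      · intro t ht
        refine (hE2 t ht).trans ?_
        rw [neg_le_neg_iff, div_mul_eq_mul_div, div_le_iff₀ hCpos]
        have := mul_le_mul_of_nonneg_left (hQle t ht) hc.le
        linarith
      · intro t ht
        refine le_trans ?_ (hE3 t ht)
        have := hXX t
        have : 0 < lam := by linarith
        have : 0 < α - 1 - lam := by linarith
        positivity
    have h2 : 0 ≤ l1 - lam * n :=
      ge_of_tendsto hQl (by filter_upwards [eventually_ge_atTop T] with t ht using hQ0 t ht)
    rwa [le_antisymm h1 h2] at hQl
  have hftz : Tendsto (fun t => t * f t) atTop (𝓝 0) := by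
    refine squeeze_zero' (g := fun t => Q t / ((α-2)*β)) ?_ ?_ (by simpa using hQz.div_const ((α-2)*β))
    · filter_upwards [eventually_ge_atTop T] with t ht
      have := hT' t ht
      exact mul_nonneg (by linarith) (hf0 t)
    · filter_upwards [eventually_ge_atTop T] with t ht
      have h1 : 0 < (α-2)*β := mul_pos (by linarith) hβ
      rw [le_div_iff₀ h1, hQ]
      have := mul_nonneg (sq_nonneg t) (hf0 t)
      have := mul_nonneg (sq_nonneg t) (hPP t)
      linarith
  have hfz : Tendsto f atTop (𝓝 0) := by
    refine squeeze_zero' (g := fun t => t * f t) (Eventually.of_forall hf0) ?_ hftz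
    filter_upwards [eventually_ge_atTop T] with t ht
    have := hT' t ht
    nlinarith [hf0 t]
  have hrz : Tendsto (fun t => t * ‖p t‖) atTop (𝓝 0) := by
    have h1 : Tendsto (fun t => √(2 * Q t)) atTop (𝓝 0) := by
      have := (hQz.const_mul 2).sqrt
      simpa using this
    refine squeeze_zero' ?_ ?_ h1
    · filter_upwards [eventually_ge_atTop T] with t ht
      have := hT' t ht
      exact mul_nonneg (by linarith) (norm_nonneg _)
    · filter_upwards [eventually_ge_atTop T] with t ht
      have := hT' t ht
      apply Real.le_sqrt_of_sq_le
      rw [hQ, real_inner_self_eq_norm_sq]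
      have := mul_nonneg (sq_nonneg t) (hf0 t)
      have : 0 ≤ (α-2)*β*(t*f t) := mul_nonneg (mul_nonneg (by linarith) hβ.le)
        (mul_nonneg (by linarith) (hf0 t))
      nlinarith
  -- boundedness
  obtain ⟨B, hB0, hB⟩ : ∃ B ≥ 0, ∀ t ≥ T, ‖x t‖ ≤ B := by
    have h1 : 0 < lam * (α-1-lam)/2 := by
      have : 0 < lam := by linarith
      have : 0 < α - 1 - lam := by linarith
      positivity
    refine ⟨√((Q T + lam * N T) / (lam * (α-1-lam)/2)), Real.sqrt_nonneg _, fun t ht => ?_⟩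
    apply Real.le_sqrt_of_sq_le
    rw [le_div_iff₀ h1, ← real_inner_self_eq_norm_sq]
    linarith [hE3 t ht, hE4 T t le_rfl ht]
  have hxpz : Tendsto (fun t => t * ⟪x t, p t⟫) atTop (𝓝 0) := by
    refine squeeze_zero_norm' (a := fun t => B * (t * ‖p t‖)) ?_ (by simpa using hrz.const_mul B)
    filter_upwards [eventually_ge_atTop T] with t ht
    have := hT' t ht
    have h0 : 0 ≤ t := by linarith
    rw [norm_mul, Real.norm_of_nonneg h0]
    have h1 : ‖⟪x t, p t⟫‖ ≤ ‖x t‖ * ‖p t‖ := norm_inner_le_norm _ _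
    have h2 : ‖x t‖ * ‖p t‖ ≤ B * ‖p t‖ := mul_le_mul_of_nonneg_right (hB t ht) (norm_nonneg _)
    have := mul_le_mul_of_nonneg_left (h1.trans h2) h0
    linarith
  have hxl : Tendsto (fun t => (α-1) * ⟪x t, x t⟫) atTop (𝓝 (2 * (n - 0 + β * 0))) := by
    refine (((hn.sub hxpz).add (hftz.const_mul β)).const_mul 2).congr ?_
    intro t
    rw [hN]; ring
  -- decreasing mechanical energy
  have hW : ∀ t s, T ≤ t → t ≤ s → f s - f t ≤ ⟪v t, v t⟫ / 2 := by
    intro t s ht hts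
    have := aux_anti (F := fun t => f t + ⟪v t, v t⟫ / 2)
      (F' := fun t => ⟪g t, v t⟫ + (⟪v t, a t⟫ + ⟪a t, v t⟫) / 2) hts ?_ ?_
    · have := hVV s
      linarith
    · intro u hu
      have hu0 := (hT' u (ht.trans hu.1)).1
      exact (hf u hu0).add (((hv u hu0).inner ℝ (hv u hu0)).div_const 2)
    · intro u hu
      have hu0 := (hT' u (ht.trans hu.1)).1
      have h1 : a u = -((α/u) • v u + β • g' u + g u) := by
        rw [eq_neg_iff_add_eq_zero, ← hode u hu0]; abel
      have h2 : ⟪v u, a u⟫ = ⟪a u, v u⟫ := real_inner_comm _ _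
      have h3 : ⟪a u, v u⟫ = -((α/u) * ⟪v u, v u⟫ + β * ⟪g' u, v u⟫ + ⟪g u, v u⟫) := by
        rw [h1]
        simp only [inner_neg_left, inner_add_left, real_inner_smul_left]
      have h4 : 0 ≤ (α/u) * ⟪v u, v u⟫ := mul_nonneg (div_nonneg (by linarith) (by linarith)) (hVV u)
      have h5 := mul_nonneg hβ.le (hmon u hu0)
      rw [h2, h3]
      linarith
  -- key inequality
  obtain ⟨K, hK⟩ : ∃ K, K = (3/2 + β) / c := ⟨_, rfl⟩
  have hKc : K * c = 3/2 + β := by rw [hK]; field_simp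
  have hK0 : 0 ≤ K := by rw [hK]; positivity
  have hZ : ∀ t s, T ≤ t → t ≤ s → 
      s * ⟪p s, x s + x s⟫ + (α-1) * (⟪x s, x s⟫ - ⟪x s, x s⟫ - ⟪x s - x s, x s - x s⟫ / 2)
        + K * (Q s + lam * N s) ≤
      t * ⟪p t, x t + x s⟫ + (α-1) * (⟪x t, x t⟫ - ⟪x s, x s⟫ - ⟪x t - x s, x t - x s⟫ / 2)
        + K * (Q t + lam * N t) := by
    intro t s ht hts
    refine aux_anti (F := fun t => t * ⟪p t, x t + x s⟫ + (α-1) *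
      (⟪x t, x t⟫ - ⟪x s, x s⟫ - ⟪x t - x s, x t - x s⟫ / 2) + K * (Q t + lam * N t))
      (F' := fun t => (-(t - β) * ⟪g t, x t + x s⟫ + t * ⟪v t, v t⟫ + t * β * ⟪g t, v t⟫)
        + K * E' t) hts ?_ ?_
    · intro u hu
      have huT := ht.trans hu.1
      have hu0 := (hT' u huT).1
      exact (aux_Z (hx u hu0) (hp u hu0) (hpt u) (hpp u hu0)).add ((hE1 u huT).const_mul K)
    · intro u hu
      have huT := ht.trans hu.1
      obtain ⟨_, hub, hu1⟩ := hT' u huT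
      have h1 : -(⟪v u, v u⟫ / 2) ≤ ⟪g u, x u + x s⟫ := by linarith [hfs u s, hW u s huT hu.2]
      have h2 := mul_le_mul_of_nonneg_left h1 (show 0 ≤ u - β by linarith)
      have h3 := mul_le_mul_of_nonneg_left (hE2 u huT) hK0
      have h4 : K * -(c * u * (f u + ⟪v u, v u⟫ + u * ⟪g u, g u⟫)) =
        -((3/2 + β) * (u * (f u + ⟪v u, v u⟫ + u * ⟪g u, g u⟫))) := by
        rw [← hKc]; ring
      rw [h4] at h3
      have hub0 : 0 ≤ u * β := mul_nonneg (by linarith) hβ.le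
      have h5 := mul_le_mul_of_nonneg_left (hGV u) hub0
      have F := hf0 u
      have V := hVV u
      have G := hGG u
      have hu0 : 0 ≤ u := by linarith
      have r1 : 0 ≤ (3/2+β) * (u * f u) := by positivity
      have r2 : 0 ≤ 3/2 * (u * (u * ⟪g u, g u⟫)) := by positivity
      have r3 : u * β * ⟪g u, g u⟫ * 1 ≤ u * β * ⟪g u, g u⟫ * u :=
        mul_le_mul_of_nonneg_left hu1 (by positivity)
      have r4 : 0 ≤ β * ⟪v u, v u⟫ := by positivity
      have r5 : 0 ≤ u * β * ⟪v u, v u⟫ := by positivity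
      have r6 : 0 ≤ u * β * ⟪g u, g u⟫ := by positivity
      linarith
  have hcross : ∀ t s, T ≤ t → T ≤ s → |t * ⟪p t, x t + x s⟫| ≤ 2 * B * (t * ‖p t‖) := by
    intro t s ht hs
    have := hT' t ht
    have h0 : 0 ≤ t := by linarith
    rw [abs_mul, abs_of_nonneg h0]
    have h1 : |⟪p t, x t + x s⟫| ≤ ‖p t‖ * ‖x t + x s‖ := abs_real_inner_le_norm _ _
    have h2 : ‖x t + x s‖ ≤ 2 * B := by
      linarith [norm_add_le (x t) (x s), hB t ht, hB s hs]
    have h3 := mul_le_mul_of_nonneg_left h2 (norm_nonneg (p t))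
    have := mul_le_mul_of_nonneg_left (h1.trans h3) h0
    linarith
  have hU : Tendsto (fun t => (α-1) * ⟪x t, x t⟫ + K * (Q t + lam * N t)) atTop
      (𝓝 (2 * (n - 0 + β * 0) + K * l1)) := hxl.add (hl1.const_mul K)
  have hr2 : Tendsto (fun t => 2 * B * (t * ‖p t‖)) atTop (𝓝 0) := by
    simpa using hrz.const_mul (2 * B)
  have hlim : ∃ y, Tendsto x atTop (𝓝 y) := by
    refine aux_cauchy (x := x) (T := T) (k := (α-1)/2) (by linarith)
      (U := fun t => ((α-1) * ⟪x t, x t⟫ + K * (Q t + lam * N t)) + 2 * B * (t * ‖p t‖))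
      (W := fun t => ((α-1) * ⟪x t, x t⟫ + K * (Q t + lam * N t)) - 2 * B * (t * ‖p t‖))
      (u := 2 * (n - 0 + β * 0) + K * l1) ?_ (by simpa using hU.add hr2)
      (by simpa using hU.sub hr2)
    intro t s ht hts
    have h1 := hZ t s ht hts
    have h2 := (abs_le.1 (hcross t s ht (ht.trans hts))).2
    have h3 := (abs_le.1 (hcross s s (ht.trans hts) (ht.trans hts))).1
    rw [← real_inner_self_eq_norm_sq]
    rw [sub_self (x s), inner_zero_left] at h1
    linarith
  obtain ⟨y, hy⟩ := hlim
  exact ⟨y, hy, hfz⟩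

theorem stmt11 (α β t₀ : ℝ) (hα : 3 < α) (hβ : 0 < β) (ht₀ : 0 < t₀)
    (Φ : H → ℝ) (hconv : ConvexOn ℝ Set.univ Φ) (hΦ : ContDiff ℝ 2 Φ)
    (heven : ∀ z : H, Φ (-z) = Φ z)
    (x x' x'' : ℝ → H) (hsol : IsDINAVDSolution α β t₀ Φ x x' x'') :
    ∃ xstar : H, (∀ w, Φ xstar ≤ Φ w) ∧
      Tendsto (fun t => ‖x t - xstar‖) atTop (𝓝 0) := by
  obtain ⟨hx, hx', -, hode⟩ := hsol
  have hd : Differentiable ℝ Φ := hΦ.differentiable (by norm_num)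
  have hgc : ContDiff ℝ 1 (gradient Φ) := by
    have h1 : ContDiff ℝ 1 (fderiv ℝ Φ) := hΦ.fderiv_right (by norm_num)
    exact (InnerProductSpace.toDual ℝ H).symm.contDiff.comp h1
  have hgd : Differentiable ℝ (gradient Φ) := hgc.differentiable (by norm_num)
  have hgrad := aux_grad hconv hd
  have hmin : ∀ w, Φ 0 ≤ Φ w := by
    intro w
    have h1 := hgrad 0 w
    have h2 := hgrad 0 (-w)
    rw [heven] at h2
    simp only [sub_zero, inner_neg_right] at h1 h2
    linarith
  have hgx : ∀ t ≥ t₀, HasDerivAt (fun t => gradient Φ (x t))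
      (fderiv ℝ (gradient Φ) (x t) (x' t)) t := fun t ht =>
    (hgd (x t)).hasFDerivAt.comp_hasDerivAt t (hx t ht)
  have hlim : ∃ y, Tendsto x atTop (𝓝 y) ∧
      Tendsto (fun t => Φ (x t) - Φ 0) atTop (𝓝 0) := by
    refine aux_core α β t₀ hα hβ ht₀ x x' x'' (fun t => gradient Φ (x t))
      (fun t => fderiv ℝ (gradient Φ) (x t) (x' t)) (fun t => Φ (x t) - Φ 0)
      hx hx' hgx ?_ hode ?_ ?_ ?_ ?_
    · intro t ht
      have h3 := (hd (x t)).hasFDerivAt.comp_hasDerivAt t (hx t ht)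
      have h4 : fderiv ℝ Φ (x t) (x' t) = ⟪gradient Φ (x t), x' t⟫ := by
        simp [gradient]
      rw [h4] at h3
      exact h3.sub_const _
    · intro t
      linarith [hmin (x t)]
    · intro t
      have := hgrad (x t) 0
      rw [zero_sub, inner_neg_right] at this
      linarith
    · intro t s
      have := hgrad (x t) (-(x s))
      rw [heven, show -(x s) - x t = -(x t + x s) by abel, inner_neg_right] at this
      linarith
    · intro t ht
      refine aux_hess (hx t ht) (hgx t ht) ?_
      intro s
      have h1 := hgrad (x t) (x s)
      have h2 := hgrad (x s) (x t)
      rw [← neg_sub (x s) (x t), inner_neg_right] at h2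
      rw [inner_sub_left]
      linarith
  obtain ⟨y, hy, hfy⟩ := hlim
  have h1 : Tendsto (fun t => Φ (x t) - Φ 0) atTop (𝓝 (Φ y - Φ 0)) :=
    ((hd.continuous.tendsto y).comp hy).sub_const _
  have h2 := tendsto_nhds_unique h1 hfy
  refine ⟨y, fun w => ?_, ?_⟩
  · linarith [hmin w]
  · exact tendsto_iff_norm_sub_tendsto_zero.1 hy
end

section
/- Let α > 3, β > 0, t₀ > 0, let Φ : H → ℝ be convex and twice continuously differentiable such that the interior of argmin Φ is nonempty, and let x : [t₀, ∞) → H be a solution of (DIN-AVD). Then there exists x* ∈ argmin Φ such that x(t) converges strongly to x* as t → ∞, and moreover ∫_{t₀}^∞ t‖∇Φ(x(t))‖ dt < ∞. -/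
open Filter MeasureTheory Set
open scoped Topology RealInnerProductSpace

variable {H : Type*} [NormedAddCommGroup H] [InnerProductSpace ℝ H] [CompleteSpace H]

/-- First order convexity inequality. -/
lemma dinavd_grad_ineq (Φ : H → ℝ) (hconv : ConvexOn ℝ Set.univ Φ) (hΦ : Differentiable ℝ Φ)
    (z w : H) : ⟪gradient Φ z, w - z⟫ ≤ Φ w - Φ z := by
  have h1 : ConvexOn ℝ Set.univ (fun s : ℝ => Φ (AffineMap.lineMap z w s)) := by
    exact hconv.comp_affineMap (AffineMap.lineMap z w : ℝ →ᵃ[ℝ] H)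
  have h2 : HasDerivAt (fun s : ℝ => Φ (AffineMap.lineMap z w s)) ⟪gradient Φ z, w - z⟫ 0 := by
    have h3 : HasDerivAt (fun s : ℝ => (AffineMap.lineMap z w s : H)) (w - z) 0 :=
      AffineMap.hasDerivAt_lineMap
    have h4 := (hΦ (AffineMap.lineMap z w (0:ℝ))).hasGradientAt.hasFDerivAt.comp_hasDerivAt (0:ℝ) h3
    have h6 : HasDerivAt (fun s : ℝ => Φ (AffineMap.lineMap z w s)) _ 0 := h4
    refine h6.congr_deriv ?_
    simp
  have h5 := h1.le_slope_of_hasDerivAt (mem_univ 0) (mem_univ 1) one_pos h2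
  simpa [slope_def_field] using h5

lemma dinavd_rho (Φ : H → ℝ) (hconv : ConvexOn ℝ Set.univ Φ) (hΦ : Differentiable ℝ Φ)
    (z : H) (ρ : ℝ) (hρ : 0 < ρ) (hz : ∀ y ∈ Metric.closedBall z ρ, ∀ w, Φ y ≤ Φ w) (p : H) :
    ρ * ‖gradient Φ p‖ ≤ ⟪p - z, gradient Φ p⟫ := by
  by_cases h0 : gradient Φ p = 0
  · simp [h0]
  have hn : 0 < ‖gradient Φ p‖ := norm_pos_iff.mpr h0
  set g := gradient Φ p with hg
  have hy : z + (ρ / ‖g‖) • g ∈ Metric.closedBall z ρ := by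
    simp only [Metric.mem_closedBall, dist_self_add_left, norm_smul, norm_div,
      Real.norm_eq_abs, abs_of_pos hρ]
    rw [abs_of_pos hn, div_mul_cancel₀ _ hn.ne']
  have h1 := dinavd_grad_ineq Φ hconv hΦ p (z + (ρ / ‖g‖) • g)
  have h2 := hz _ hy p
  rw [← hg] at h1
  have h3 : ⟪g, z + (ρ / ‖g‖) • g - p⟫ = ρ * ‖g‖ - ⟪p - z, g⟫ := by
    rw [inner_sub_right, inner_add_right, inner_smul_right, real_inner_self_eq_norm_sq,
      inner_sub_left, real_inner_comm g p, real_inner_comm g z]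
    field_simp
    ring
  linarith

lemma dinavd_grad_contDiff (Φ : H → ℝ) (hΦ : ContDiff ℝ 2 Φ) : ContDiff ℝ 1 (gradient Φ) := by
  have h : ContDiff ℝ 1 (fderiv ℝ Φ) := hΦ.fderiv_right (by norm_num)
  exact (InnerProductSpace.toDual ℝ H).symm.contDiff.comp h

/-- Algebra of the energy derivative. -/
lemma dinavd_alg (α β lam t Δ ρ : ℝ) (hα : 3 < α) (hβ : 0 < β) (ht : 0 < t)
    (hlam : lam = (α + 1) / 2)
    (ht1 : 2 * β ≤ t) (ht2 : 2 * β * (α - 2) ≤ (lam - 2) * t)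
    (y v a h g : H) (hode : a + (α / t) • v + β • h + g = 0)
    (hΔ : 0 ≤ Δ) (h1 : Δ ≤ ⟪y, g⟫) (h2 : ρ * ‖g‖ ≤ ⟪y, g⟫) :
    (2 * t - β * (lam + 2 - α)) * Δ + (t ^ 2 - β * (lam + 2 - α) * t) * ⟪g, v⟫
      + 1 / 2 * (2 * ⟪lam • y + t • (v + β • g),
          lam • v + (t • (a + β • h) + (1:ℝ) • (v + β • g))⟫)
      + lam * (α - lam - 1) / 2 * (2 * ⟪y, v⟫) ≤ - ((lam - 2) * ρ / 2 * (t * ‖g‖)) := by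
  have e1 : t • (a + β • h) = (-α) • v - t • g := by
    have : a + β • h = -((α / t) • v) - g := by
      rw [← sub_eq_zero, ← hode]; abel
    rw [this, smul_sub, smul_neg, smul_smul, mul_div_cancel₀ _ ht.ne', neg_smul]
  rw [e1]
  simp only [inner_add_left, inner_add_right, inner_sub_right, inner_smul_left, inner_smul_right,
    real_inner_self_eq_norm_sq, real_inner_comm g v, RCLike.conj_to_real]
  set I := ⟪y, g⟫
  have hg : 0 ≤ β * t * (t - β) * ‖g‖ ^ 2 := by
    have : 0 ≤ t - β := by linarith
    positivity
  have hv : 0 ≤ t * (α - 1 - lam) * ‖v‖ ^ 2 := by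
    have : 0 ≤ α - 1 - lam := by linarith
    positivity
  have hI1 : 0 ≤ (lam * (t - β) - (lam - 2) / 2 * t) * (I - Δ) := by
    apply mul_nonneg _ (by linarith)
    nlinarith
  have hI2 : 0 ≤ ((lam - 2) / 2 * t) * (I - ρ * ‖g‖) := by
    apply mul_nonneg _ (by linarith)
    have : 0 ≤ lam - 2 := by linarith
    positivity
  have hD : 0 ≤ ((lam - 2) / 2 * t - β * (α - 2)) * Δ := mul_nonneg (by linarith) hΔ
  nlinarith

/-- Asymptotics of the first order linear equation. -/
lemma dinavd_conv (a β T : ℝ) (ha : 1 ≤ a) (hβ : 0 < β) (hT : 0 < T)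
    (x x' g : ℝ → H) (hx : ∀ t ∈ Set.Ici T, HasDerivAt x (x' t) t)
    (K K' : ℝ → ℝ) (hK : ∀ t ∈ Set.Ici T, HasDerivAt K (K' t) t)
    (hK' : ∀ t ∈ Set.Ici T, t * ‖g t‖ ≤ K' t) (hK0 : ∀ t ∈ Set.Ici T, 0 ≤ K t) (M : ℝ)
    (hKM : ∀ t ∈ Set.Ici T, K t ≤ M) (l : H)
    (hw : Tendsto (fun t => t • x' t + a • x t + (β * t) • g t) atTop (𝓝 (a • l))) :
    Tendsto (fun t => ‖x t - l‖) atTop (𝓝 0) := by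
  have ha0 : 0 < a := by linarith
  rw [Metric.tendsto_atTop]
  intro ε hε
  obtain ⟨T1, hT1⟩ := (Metric.tendsto_atTop.1 hw) (a * ε / 2) (by positivity)
  set S := max T T1
  have hST : T ≤ S := le_max_left _ _
  have hST1 : T1 ≤ S := le_max_right _ _
  have hS0 : 0 < S := hT.trans_le hST
  set C := S ^ a * ‖x S - l‖
  have hbound : ∀ t, S ≤ t → t ^ a * ‖x t - l‖ ≤ C + ε / 2 * t ^ a + β * (t ^ (a - 1) * K t) := by
    intro t ht
    have key := image_norm_le_of_norm_deriv_right_le_deriv_boundary'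
      (f := fun s => s ^ a • (x s - l))
      (f' := fun s => s ^ a • x' s + (a * s ^ (a - 1)) • (x s - l))
      (a := S) (b := t)
      (B := fun s => C + ε / 2 * s ^ a + β * (s ^ (a - 1) * K s))
      (B' := fun s => ε / 2 * (a * s ^ (a - 1))
        + β * (((a - 1) * s ^ (a - 1 - 1)) * K s + s ^ (a - 1) * K' s))
    have d1 : ∀ s, S ≤ s → HasDerivAt (fun s => s ^ a • (x s - l))
        (s ^ a • x' s + (a * s ^ (a - 1)) • (x s - l)) s := by
      intro s hs
      exact (Real.hasDerivAt_rpow_const (Or.inl (hS0.trans_le hs).ne')).smul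
        ((hx s (hST.trans hs)).sub_const l)
    have d2 : ∀ s, S ≤ s → HasDerivAt (fun s => C + ε / 2 * s ^ a + β * (s ^ (a - 1) * K s))
        (ε / 2 * (a * s ^ (a - 1))
        + β * (((a - 1) * s ^ (a - 1 - 1)) * K s + s ^ (a - 1) * K' s)) s := by
      intro s hs
      have hs0 := (hS0.trans_le hs).ne'
      have q1 := ((Real.hasDerivAt_rpow_const (p := a) (Or.inl hs0)).const_mul (ε / 2)).const_add C
      have q2 := ((Real.hasDerivAt_rpow_const (p := a - 1) (Or.inl hs0)).mul
        (hK s (hST.trans hs))).const_mul β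
      exact q1.add q2
    have := key (fun s hs => (d1 s hs.1).continuousAt.continuousWithinAt)
      (fun s hs => (d1 s hs.1).hasDerivWithinAt) ?_
      (fun s hs => (d2 s hs.1).continuousAt.continuousWithinAt)
      (fun s hs => (d2 s hs.1).hasDerivWithinAt) ?_ (right_mem_Icc.2 ht)
    · have ht0 : 0 < t := hS0.trans_le ht
      rw [norm_smul, Real.norm_of_nonneg (Real.rpow_nonneg ht0.le a)] at this
      exact this
    · simp only [norm_smul]
      rw [Real.norm_of_nonneg (Real.rpow_nonneg hS0.le a)]
      have := hK0 S hST
      have : 0 ≤ ε / 2 * S ^ a + β * (S ^ (a - 1) * K S) := by positivity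
      change C ≤ _
      linarith
    · intro s hs
      have hs0 : 0 < s := hS0.trans_le hs.1
      have e1 : s ^ a • x' s + (a * s ^ (a - 1)) • (x s - l)
          = s ^ (a - 1) • ((s • x' s + a • x s + (β * s) • g s - a • l) - (β * s) • g s) := by
        have : s ^ a = s ^ (a - 1) * s := by
          rw [Real.rpow_sub_one hs0.ne']; field_simp
        rw [this]; module
      rw [e1, norm_smul, Real.norm_of_nonneg (Real.rpow_nonneg hs0.le _)]
      have e2 : ‖s • x' s + a • x s + (β * s) • g s - a • l‖ ≤ a * ε / 2 := by
        have := hT1 s (hST1.trans hs.1)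
        rw [dist_eq_norm] at this
        exact this.le
      have e3 : ‖(β * s) • g s‖ ≤ β * K' s := by
        rw [norm_smul, Real.norm_of_nonneg (by positivity), mul_assoc]
        exact mul_le_mul_of_nonneg_left (hK' s (hST.trans hs.1)) hβ.le
      have e4 := (norm_sub_le (s • x' s + a • x s + (β * s) • g s - a • l) ((β * s) • g s)).trans
        (add_le_add e2 e3)
      have e5 := mul_le_mul_of_nonneg_left e4 (Real.rpow_nonneg hs0.le (a - 1))
      have e6 : 0 ≤ β * (((a - 1) * s ^ (a - 1 - 1)) * K s) := by
        have := hK0 s (hST.trans hs.1)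
        have : 0 ≤ a - 1 := by linarith
        positivity
      linarith
  have lim : Tendsto (fun t : ℝ => C * t ^ (-a) + ε / 2 + β * M * t⁻¹) atTop
      (𝓝 (C * 0 + ε / 2 + β * M * 0)) :=
    (((tendsto_rpow_neg_atTop ha0).const_mul C).add_const _).add
      (tendsto_inv_atTop_zero.const_mul _)
  have ev := lim.eventually (gt_mem_nhds (show C * 0 + ε / 2 + β * M * 0 < ε by linarith))
  obtain ⟨N, hN⟩ := eventually_atTop.1 ev
  refine ⟨max N S, fun t ht => ?_⟩
  have ht1 := hN t ((le_max_left _ _).trans ht)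
  have htS : S ≤ t := (le_max_right _ _).trans ht
  have ht0 : 0 < t := hS0.trans_le htS
  have hb := hbound t htS
  simp only [dist_zero_right, norm_norm]
  refine lt_of_le_of_lt ?_ ht1
  have hp : 0 < t ^ a := Real.rpow_pos_of_pos ht0 a
  rw [Real.rpow_sub_one ht0.ne'] at hb
  rw [Real.rpow_neg ht0.le]
  have hkm := hKM t (hST.trans htS)
  have h3 : ‖x t - l‖ ≤ (C + ε / 2 * t ^ a + β * (t ^ a / t * K t)) / t ^ a := by
    rw [le_div_iff₀ hp]; linarith
  refine h3.trans ?_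
  have h4 : (C + ε / 2 * t ^ a + β * (t ^ a / t * K t)) / t ^ a
    = C * (t ^ a)⁻¹ + ε / 2 + β * K t * t⁻¹ := by field_simp
  rw [h4]
  gcongr

theorem stmt12 (α β t₀ : ℝ) (hα : 3 < α) (hβ : 0 < β) (ht₀ : 0 < t₀)
    (Φ : H → ℝ) (hconv : ConvexOn ℝ Set.univ Φ) (hΦ : ContDiff ℝ 2 Φ)
    (hint : (interior {z : H | ∀ w, Φ z ≤ Φ w}).Nonempty)
    (x x' x'' : ℝ → H) (hsol : IsDINAVDSolution α β t₀ Φ x x' x'') :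
    (∃ xstar : H, (∀ w, Φ xstar ≤ Φ w) ∧
      Tendsto (fun t => ‖x t - xstar‖) atTop (𝓝 0)) ∧
    IntegrableOn (fun t => t * ‖gradient Φ (x t)‖) (Set.Ici t₀) := by
  obtain ⟨hx, hx', -, hode⟩ := hsol
  have hΦd : Differentiable ℝ Φ := hΦ.differentiable (by norm_num)
  have hG : ContDiff ℝ 1 (gradient Φ) := dinavd_grad_contDiff Φ hΦ
  obtain ⟨z, hz⟩ := hint
  obtain ⟨ρ, hρ, hball⟩ := Metric.nhds_basis_closedBall.mem_iff.1 (mem_interior_iff_mem_nhds.1 hz)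
  have hzmin : ∀ w, Φ z ≤ Φ w := interior_subset hz
  set g : ℝ → H := fun t => gradient Φ (x t) with hg
  set h : ℝ → H := fun t => (fderiv ℝ (gradient Φ) (x t)) (x' t) with hh
  have hgd : ∀ t ∈ Set.Ici t₀, HasDerivAt g (h t) t := fun t ht =>
    ((hG.differentiable one_ne_zero) (x t)).hasFDerivAt.comp_hasDerivAt t (hx t ht)
  have hφd : ∀ t ∈ Set.Ici t₀, HasDerivAt (fun t => Φ (x t)) ⟪g t, x' t⟫ t := fun t ht => by
    have h6 : HasDerivAt (fun t => Φ (x t)) _ t :=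
      (hΦd (x t)).hasGradientAt.hasFDerivAt.comp_hasDerivAt t (hx t ht)
    refine h6.congr_deriv ?_
    simp [hg]
  have hgc : ContinuousOn g (Ici t₀) := fun t ht => (hgd t ht).continuousAt.continuousWithinAt
  have hfc : ContinuousOn (fun t => t * ‖g t‖) (Ici t₀) := continuousOn_id.mul hgc.norm
  obtain ⟨lam, hlam⟩ : ∃ lam, lam = (α + 1) / 2 := ⟨_, rfl⟩
  have hl2 : 0 < lam - 2 := by linarith
  set E : ℝ → ℝ := fun t => (t ^ 2 - β * (lam + 2 - α) * t) * (Φ (x t) - Φ z)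
    + 1 / 2 * ‖lam • (x t - z) + t • (x' t + β • g t)‖ ^ 2
    + lam * (α - lam - 1) / 2 * ‖x t - z‖ ^ 2 with hE
  set E' : ℝ → ℝ := fun t =>
    (2 * t - β * (lam + 2 - α)) * (Φ (x t) - Φ z) + (t ^ 2 - β * (lam + 2 - α) * t) * ⟪g t, x' t⟫
      + 1 / 2 * (2 * ⟪lam • (x t - z) + t • (x' t + β • g t),
          lam • x' t + (t • (x'' t + β • h t) + (1:ℝ) • (x' t + β • g t))⟫)
      + lam * (α - lam - 1) / 2 * (2 * ⟪x t - z, x' t⟫) with hE'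
  have hEd : ∀ t ∈ Set.Ici t₀, HasDerivAt E (E' t) t := by
    intro t ht
    have q1 : HasDerivAt (fun t : ℝ => t ^ 2 - β * (lam + 2 - α) * t)
        (2 * t - β * (lam + 2 - α)) t := by
      have h6 := (hasDerivAt_pow 2 t).sub ((hasDerivAt_id t).const_mul (β * (lam + 2 - α)))
      refine HasDerivAt.congr_deriv h6 ?_
      simp
    have q2 := q1.mul ((hφd t ht).sub_const (Φ z))
    have q3 := (hx t ht).sub_const z
    have q4 := (q3.const_smul lam).add
      ((hasDerivAt_id t).smul ((hx' t ht).add ((hgd t ht).const_smul β)))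
    exact (q2.add (q4.norm_sq.const_mul (1 / 2))).add
      (q3.norm_sq.const_mul (lam * (α - lam - 1) / 2))
  obtain ⟨T, hT0, hT1, hT2, hT3⟩ : ∃ T, t₀ ≤ T ∧ 2 * β ≤ T ∧ 2 * β * (α - 2) / (lam - 2) ≤ T ∧
      β * (lam + 2 - α) ≤ T :=
    ⟨max (max t₀ (2 * β)) (max (2 * β * (α - 2) / (lam - 2)) (β * (lam + 2 - α))),
      by simp, by simp, by simp, by simp⟩
  have hTpos : 0 < T := ht₀.trans_le hT0
  set c := (lam - 2) * ρ / 2 with hc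
  have hcpos : 0 < c := by positivity
  have hEb : ∀ t ∈ Ici T, E' t ≤ -(c * (t * ‖g t‖)) := by
    intro t ht
    have htT : T ≤ t := ht
    refine dinavd_alg α β lam t (Φ (x t) - Φ z) ρ hα hβ (hTpos.trans_le htT) hlam (hT1.trans htT) ?_
      (x t - z) (x' t) (x'' t) (h t) (g t) (hode t (hT0.trans htT))
      (sub_nonneg.2 (hzmin _)) ?_ ?_
    · have := hT2.trans htT
      rw [div_le_iff₀ hl2] at this
      linarith
    · have := dinavd_grad_ineq Φ hconv hΦd (x t) z
      have e : ⟪gradient Φ (x t), z - x t⟫ = - ⟪x t - z, g t⟫ := by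
        rw [← neg_sub, inner_neg_right, real_inner_comm]
      linarith
    · exact dinavd_rho Φ hconv hΦd z ρ hρ (fun y hy => hball hy) (x t)
  have hEneg : ∀ t ∈ Ici T, E' t ≤ 0 := by
    intro t ht
    have : 0 < t := hTpos.trans_le ht
    have : 0 ≤ c * (t * ‖g t‖) := by positivity
    linarith [hEb t ht]
  have hE0 : ∀ t ∈ Ici T, 0 ≤ E t := by
    intro t ht
    have htT : T ≤ t := ht
    have h1 : 0 ≤ t ^ 2 - β * (lam + 2 - α) * t := by
      have : 0 ≤ (t - β * (lam + 2 - α)) * t := mul_nonneg (by linarith) (by linarith)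
      linarith
    have h2 : 0 ≤ Φ (x t) - Φ z := sub_nonneg.2 (hzmin _)
    have h3 : 0 ≤ lam * (α - lam - 1) / 2 := by
      have : 0 ≤ α - lam - 1 := by linarith
      have : 0 ≤ lam := by linarith
      positivity
    simp only [hE]
    positivity
  have hEanti : AntitoneOn E (Ici T) := by
    refine antitoneOn_of_hasDerivWithinAt_nonpos (f' := E') (convex_Ici T)
      (fun t ht => (hEd t (hT0.trans ht)).continuousAt.continuousWithinAt) ?_ ?_
    · intro t ht
      exact (hEd t (hT0.trans (interior_subset ht))).hasDerivWithinAt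
    · intro t ht
      exact hEneg t (interior_subset ht)
  -- the energy converges
  obtain ⟨L, hL⟩ : ∃ L, Tendsto E atTop (𝓝 L) := by
    have anti : Antitone (fun t => E (max T t)) := fun s t hst =>
      hEanti (mem_Ici.2 (le_max_left _ _)) (mem_Ici.2 (le_max_left _ _)) (max_le_max le_rfl hst)
    have hb : BddBelow (range (fun t => E (max T t))) :=
      ⟨0, by rintro _ ⟨t, rfl⟩; exact hE0 _ (mem_Ici.2 (le_max_left _ _))⟩
    refine ⟨_, (tendsto_atTop_ciInf anti hb).congr' ?_⟩
    filter_upwards [eventually_ge_atTop T] with t ht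
    rw [max_eq_right ht]
  have hE'int : IntegrableOn E' (Ioi T) :=
    integrableOn_Ioi_deriv_of_nonpos' (fun t ht => hEd t (hT0.trans ht))
      (fun t ht => hEneg t (Ioi_subset_Ici_self ht)) hL
  have hIoi : IntegrableOn (fun t => t * ‖g t‖) (Ioi T) := by
    refine Integrable.mono' (hE'int.norm.const_mul c⁻¹)
      ((hfc.mono (fun t ht => hT0.trans (le_of_lt ht))).aestronglyMeasurable measurableSet_Ioi) ?_
    refine (ae_restrict_iff' measurableSet_Ioi).2 (Eventually.of_forall fun t ht => ?_)
    have ht' : T ≤ t := le_of_lt ht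
    have htp : 0 < t := hTpos.trans_le ht'
    rw [Real.norm_of_nonneg (by positivity), ← div_eq_inv_mul, le_div_iff₀ hcpos,
      Real.norm_eq_abs, abs_of_nonpos (hEneg t ht')]
    linarith [hEb t ht']
  have hIci : IntegrableOn (fun t => t * ‖g t‖) (Ici t₀) := by
    have h1 : IntegrableOn (fun t => t * ‖g t‖) (Icc t₀ T) :=
      (hfc.mono Icc_subset_Ici_self).integrableOn_Icc
    exact (h1.union hIoi).mono_set (fun t ht => by
      by_cases h : t ≤ T
      · exact Or.inl ⟨ht, h⟩
      · exact Or.inr (not_le.1 h))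
  refine ⟨?_, hIci⟩
  -- convergence of the auxiliary curve
  set w : ℝ → H := fun t => t • x' t + (α - 1) • x t + (β * t) • g t with hw
  have hwd : ∀ t ∈ Ioi T, HasDerivAt w ((β - t) • g t) t := by
    intro t ht
    have ht' : t₀ ≤ t := hT0.trans (le_of_lt ht)
    have htp : 0 < t := ht₀.trans_le ht'
    have q := (((hasDerivAt_id t).smul (hx' t ht')).add ((hx t ht').const_smul (α - 1))).add
      (((hasDerivAt_id t).const_mul β).smul (hgd t ht'))
    refine q.congr_deriv ?_
    have e : x'' t = -((α / t) • x' t + β • h t + g t) := by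
      rw [← sub_eq_zero, ← hode t ht']; abel
    simp only [id, e]
    have e2 : t • ((α / t) • x' t) = α • x' t := by rw [smul_smul, mul_div_cancel₀ _ htp.ne']
    rw [smul_neg, smul_add, smul_add, e2]
    module
  have hwint : IntegrableOn (fun t => (β - t) • g t) (Ioi T) := by
    refine Integrable.mono' (hIoi)
      ((ContinuousOn.smul (by fun_prop)
        (hgc.mono (fun t ht => hT0.trans (le_of_lt ht)))).aestronglyMeasurable measurableSet_Ioi) ?_
    refine (ae_restrict_iff' measurableSet_Ioi).2 (Eventually.of_forall fun t ht => ?_)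
    have ht' : T < t := ht
    rw [norm_smul]
    gcongr
    rw [Real.norm_eq_abs, abs_le]
    constructor <;> linarith
  have hwlim := tendsto_limUnder_of_hasDerivAt_of_integrableOn_Ioi hwd hwint
  set l := limUnder atTop w with hl
  have hα1 : α - 1 ≠ 0 := by linarith
  have hconvx : Tendsto (fun t => ‖x t - (α - 1)⁻¹ • l‖) atTop (𝓝 0) := by
    refine dinavd_conv (α - 1) β T (by linarith) hβ hTpos x x' g (fun t ht => hx t (hT0.trans ht))
      (fun t => c⁻¹ * (E T - E t)) (fun t => c⁻¹ * (- E' t))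
      (fun t ht => ((hEd t (hT0.trans ht)).const_sub (E T)).const_mul c⁻¹) ?_ ?_ (c⁻¹ * E T) ?_ _ ?_
    · intro t ht
      rw [← div_eq_inv_mul, le_div_iff₀ hcpos]
      linarith [hEb t ht]
    · intro t ht
      have := hEanti self_mem_Ici ht ht
      exact mul_nonneg (by positivity) (by linarith)
    · intro t ht
      have := hE0 t ht
      exact mul_le_mul_of_nonneg_left (by linarith) (by positivity)
    · rw [smul_inv_smul₀ hα1]
      exact hwlim
  refine ⟨(α - 1)⁻¹ • l, ?_, hconvx⟩
  set xs := (α - 1)⁻¹ • l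
  have hxs : Tendsto x atTop (𝓝 xs) := tendsto_iff_norm_sub_tendsto_zero.2 hconvx
  -- the gradient vanishes at the limit
  have hgl : Tendsto (fun t => ‖g t‖) atTop (𝓝 ‖gradient Φ xs‖) :=
    ((hG.continuous.tendsto xs).comp hxs).norm
  have hgz : gradient Φ xs = 0 := by
    by_contra hne
    have hpos : 0 < ‖gradient Φ xs‖ := norm_pos_iff.2 hne
    obtain ⟨N, hN⟩ := eventually_atTop.1 (hgl.eventually (lt_mem_nhds (half_lt_self hpos)))
    set δ := ‖gradient Φ xs‖ / 2
    have hδ : 0 < δ := by positivity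
    set S := max T N
    have hi : IntegrableOn (fun _ : ℝ => T * δ) (Ioi S) := by
      refine Integrable.mono' (hIoi.mono_set (Ioi_subset_Ioi (le_max_left T N)))
        aestronglyMeasurable_const ?_
      refine (ae_restrict_iff' measurableSet_Ioi).2 (Eventually.of_forall fun t ht => ?_)
      have ht' : S < t := ht
      have h1 : T ≤ t := (le_max_left T N).trans ht'.le
      have h2 := hN t ((le_max_right T N).trans ht'.le)
      rw [Real.norm_of_nonneg (by positivity)]
      exact mul_le_mul h1 h2.le hδ.le (by linarith)
    rw [integrableOn_const_iff] at hi
    rcases hi with hi | hi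
    · have : T * δ ≠ 0 := by positivity
      simp_all
    · simp at hi
  intro y
  have := dinavd_grad_ineq Φ hconv hΦd xs y
  rw [hgz, inner_zero_left] at this
  linarith
end

section
/- Let α > 3, β > 0, t₀ > 0, let Φ : H → ℝ be convex and twice continuously differentiable with argmin Φ nonempty and with ∇Φ uniformly monotone on bounded sets, and let x : [t₀, ∞) → H be a solution of (DIN-AVD). Then argmin Φ is a singleton {x*}, and x(t) converges strongly to x* as t → ∞. -/
open Filter MeasureTheory Set
open scoped Topology RealInnerProductSpace

variable {H : Type*} [NormedAddCommGroup H] [InnerProductSpace ℝ H] [CompleteSpace H]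

theorem aux_grad_ineq (Φ : H → ℝ) (hconv : ConvexOn ℝ Set.univ Φ) (hd : Differentiable ℝ Φ)
    (u v : H) : Φ u + ⟪gradient Φ u, v - u⟫ ≤ Φ v := by
  have hc : ConvexOn ℝ Set.univ (fun s : ℝ => Φ (AffineMap.lineMap u v s)) := by
    have := hconv.comp_affineMap (AffineMap.lineMap u v : ℝ →ᵃ[ℝ] H)
    rw [Set.preimage_univ] at this
    exact this
  have hder : HasDerivAt (fun s : ℝ => Φ (AffineMap.lineMap u v s)) ⟪gradient Φ u, v - u⟫ 0 := by
    have h1 : HasDerivAt (fun s : ℝ => (AffineMap.lineMap u v s : H)) (v - u) 0 :=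
      AffineMap.hasDerivAt_lineMap
    have h2 : HasFDerivAt Φ (fderiv ℝ Φ u) (AffineMap.lineMap u v (0:ℝ)) := by
      simpa using (hd u).hasFDerivAt
    have h3 := h2.comp_hasDerivAt (0:ℝ) h1
    have h4 : ⟪gradient Φ u, v - u⟫ = fderiv ℝ Φ u (v - u) := by
      simp [gradient]
    rw [h4]
    exact h3
  have := hc.le_slope_of_hasDerivAt (Set.mem_univ 0) (Set.mem_univ 1) zero_lt_one hder
  simp only [slope_def_field, AffineMap.lineMap_apply_zero, AffineMap.lineMap_apply_one, sub_zero,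
    div_one] at this
  linarith

theorem aux_grad_diff (Φ : H → ℝ) (hΦ : ContDiff ℝ 2 Φ) : Differentiable ℝ (gradient Φ) := by
  have h1 : Differentiable ℝ (fderiv ℝ Φ) :=
    (hΦ.fderiv_right (m := 1) (by norm_num)).differentiable (by norm_num)
  have h2 : Differentiable ℝ ((InnerProductSpace.toDual ℝ H).symm : (H →L[ℝ] ℝ) → H) :=
    (InnerProductSpace.toDual ℝ H).symm.toContinuousLinearEquiv.differentiable
  exact h2.comp h1

theorem aux_grad_zero (Φ : H → ℝ) (z : H) (hz : ∀ w, Φ z ≤ Φ w) : gradient Φ z = 0 := by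
  have : IsLocalMin Φ z := Filter.Eventually.of_forall hz
  simp [gradient, this.fderiv_eq_zero]

theorem aux_lyap (α β t₀ : ℝ) (hα : 3 < α) (hβ : 0 < β) (ht₀ : 0 < t₀)
    (Φ : H → ℝ) (hconv : ConvexOn ℝ Set.univ Φ) (hΦ : ContDiff ℝ 2 Φ)
    (z : H) (hz : ∀ w, Φ z ≤ Φ w)
    (x x' x'' : ℝ → H) (hsol : IsDINAVDSolution α β t₀ Φ x x' x'') :
    ∃ T C : ℝ, 0 < T ∧ ∀ t, T ≤ t → ‖x t - z‖ ^ 2 ≤ C ∧ t ^ 2 * (Φ (x t) - Φ z) ≤ C := by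
  obtain ⟨hx, hx', -, heq⟩ := hsol
  have hd : Differentiable ℝ Φ := hΦ.differentiable (by norm_num)
  have hgd := aux_grad_diff Φ hΦ
  obtain ⟨k, rfl⟩ : ∃ k, α = 3 + k := ⟨α - 3, by ring⟩
  have hk : 0 < k := by linarith
  obtain ⟨T, hTdef⟩ : ∃ T, T = max t₀ (2 * β + 2 * β / k) := ⟨_, rfl⟩
  have hT0 : t₀ ≤ T := hTdef ▸ le_max_left _ _
  have hT1 : 2 * β + 2 * β / k ≤ T := hTdef ▸ le_max_right _ _
  have hbk : 0 < 2 * β / k := by positivity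
  have hT2 : ∀ t, T ≤ t → 2 * β * k + 2 * β ≤ k * t := by
    intro t ht
    have : (2 * β + 2 * β / k) * k ≤ t * k := by gcongr; linarith
    have h2 : (2 * β + 2 * β / k) * k = 2 * β * k + 2 * β := by field_simp
    linarith
  let g : ℝ → H := fun t => gradient Φ (x t)
  let E : ℝ → ℝ := fun t => (t ^ 2 - β * (1 - k / 2) * t) * (Φ (x t) - Φ z)
    + 1 / 2 * ‖(2 + k / 2) • (x t - z) + t • (x' t + β • g t)‖ ^ 2
    + (2 + k / 2) * (k / 2) / 2 * ‖x t - z‖ ^ 2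
  let E' : ℝ → ℝ := fun t => (2 * t - β * (1 - k / 2)) * (Φ (x t) - Φ z)
    + (2 + k / 2) * (β - t) * ⟪g t, x t - z⟫
    - t * (k / 2) * ‖x' t‖ ^ 2 - t * β * (t - β) * ‖g t‖ ^ 2
  have hE : ∀ t, t₀ ≤ t → HasDerivAt E (E' t) t := by
    intro t ht
    have htp : t ≠ 0 := by linarith
    have hxt := hx t ht
    have hxt' := hx' t ht
    have hg : HasDerivAt g (fderiv ℝ (gradient Φ) (x t) (x' t)) t :=
      (hgd (x t)).hasFDerivAt.comp_hasDerivAt t hxt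
    have hP : HasDerivAt (fun s => Φ (x s)) ⟪g t, x' t⟫ t := by
      have h3 := (hd (x t)).hasFDerivAt.comp_hasDerivAt t hxt
      have h4 : ⟪g t, x' t⟫ = fderiv ℝ Φ (x t) (x' t) := by
        simp [g, gradient]
      rw [h4]
      exact h3
    have hxz : HasDerivAt (fun s => x s - z) (x' t) t := hxt.sub_const z
    have hv : HasDerivAt (fun s => (2 + k / 2) • (x s - z) + s • (x' s + β • g s))
        (-(k / 2) • x' t + (β - t) • g t) t := by
      have := (hxz.const_smul (2 + k / 2)).add
        ((hasDerivAt_id t).smul (hxt'.add (hg.const_smul β)))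
      refine this.congr_deriv ?_
      have he : x'' t = -(((3 + k) / t) • x' t + β • (fderiv ℝ (gradient Φ) (x t)) (x' t)
        + g t) := by
        rw [eq_neg_iff_add_eq_zero, ← heq t ht]; simp only [g]; abel
      simp only [he, id, Pi.add_apply, Pi.smul_apply]
      match_scalars <;> field_simp <;> ring
    have hc : HasDerivAt (fun s : ℝ => s ^ 2 - β * (1 - k / 2) * s)
        (2 * t - β * (1 - k / 2)) t := by
      have := ((hasDerivAt_id t).pow 2).sub ((hasDerivAt_id t).const_mul (β * (1 - k / 2)))
      refine this.congr_deriv ?_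
      simp
    have hfin := ((hc.mul (hP.sub_const (Φ z))).add (hv.norm_sq.const_mul (1 / 2))).add
      (hxz.norm_sq.const_mul ((2 + k / 2) * (k / 2) / 2))
    refine hfin.congr_deriv ?_
    simp only [E', inner_add_left, inner_add_right, inner_smul_left, inner_smul_right,
      real_inner_self_eq_norm_sq, real_inner_comm (g t) (x' t),
      real_inner_comm (g t) (x t - z), RCLike.conj_to_real]
    ring
  have hanti : AntitoneOn E (Set.Ici T) := by
    refine antitoneOn_of_hasDerivWithinAt_nonpos (f' := E') (convex_Ici T) ?_ ?_ ?_
    · intro t ht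
      exact (hE t (hT0.trans ht)).continuousAt.continuousWithinAt
    · intro t ht
      rw [interior_Ici] at ht
      exact (hE t (hT0.trans (le_of_lt ht))).hasDerivWithinAt
    · intro t ht
      rw [interior_Ici] at ht
      have ht' : T ≤ t := le_of_lt ht
      have htb : 2 * β ≤ t := by linarith
      have h2 := hT2 t ht'
      have hW : 0 ≤ Φ (x t) - Φ z := sub_nonneg.2 (hz _)
      have hPW : Φ (x t) - Φ z ≤ ⟪g t, x t - z⟫ := by
        have := aux_grad_ineq Φ hconv hd (x t) z
        rw [← neg_sub (x t) z, inner_neg_right] at this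
        simp only [g]; linarith
      have htp : 0 < t := by linarith
      have a1 : 0 ≤ t * (k / 2) * ‖x' t‖ ^ 2 := by positivity
      have a2 : 0 ≤ t * β * (t - β) * ‖g t‖ ^ 2 := by
        have : 0 ≤ t - β := by linarith
        positivity
      have a3 : (2 + k / 2) * (t - β) * (Φ (x t) - Φ z) ≤
          (2 + k / 2) * (t - β) * ⟪g t, x t - z⟫ := by
        have : 0 ≤ t - β := by linarith
        gcongr
      have a4 : 0 ≤ (k / 2 * t - β * (1 + k)) * (Φ (x t) - Φ z) :=
        mul_nonneg (by linarith) hW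
      simp only [E']
      linarith
  have hTp : 0 < T := by linarith
  have hm : 0 < (2 + k / 2) * (k / 2) / 2 := by positivity
  refine ⟨T, max (2 * E T) (E T / ((2 + k / 2) * (k / 2) / 2)), hTp, fun t ht => ?_⟩
  have hle : E t ≤ E T := hanti Set.self_mem_Ici ht ht
  have htb : 2 * β ≤ t := by linarith
  have htp : 0 < t := by linarith
  have hW : 0 ≤ Φ (x t) - Φ z := sub_nonneg.2 (hz _)
  have b1 : 0 ≤ (t ^ 2 / 2 - β * (1 - k / 2) * t) * (Φ (x t) - Φ z) := by
    refine mul_nonneg ?_ hW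
    have : 0 ≤ t * (t - 2 * β) := mul_nonneg htp.le (by linarith)
    have : 0 ≤ β * k * t := by positivity
    linarith
  have b2 : 0 ≤ t ^ 2 / 2 * (Φ (x t) - Φ z) := by positivity
  have b3 : 0 ≤ 1 / 2 * ‖(2 + k / 2) • (x t - z) + t • (x' t + β • g t)‖ ^ 2 := by positivity
  have b4 : 0 ≤ (2 + k / 2) * (k / 2) / 2 * ‖x t - z‖ ^ 2 := by positivity
  have hEt : E t = (t ^ 2 - β * (1 - k / 2) * t) * (Φ (x t) - Φ z)
    + 1 / 2 * ‖(2 + k / 2) • (x t - z) + t • (x' t + β • g t)‖ ^ 2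
    + (2 + k / 2) * (k / 2) / 2 * ‖x t - z‖ ^ 2 := rfl
  constructor
  · refine le_max_of_le_right ?_
    rw [le_div_iff₀ hm]
    linarith
  · refine le_max_of_le_left ?_
    linarith

theorem stmt14 (α β t₀ : ℝ) (hα : 3 < α) (hβ : 0 < β) (ht₀ : 0 < t₀)
    (Φ : H → ℝ) (hconv : ConvexOn ℝ Set.univ Φ) (hΦ : ContDiff ℝ 2 Φ)
    (hne : ∃ z : H, ∀ w, Φ z ≤ Φ w)
    (hmono : ∀ r : ℝ, 0 < r → ∃ ω : ℝ → ℝ,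
      MonotoneOn ω (Set.Ici 0) ∧ (∀ s, 0 ≤ s → 0 ≤ ω s) ∧
      (∀ s, 0 ≤ s → (ω s = 0 ↔ s = 0)) ∧
      ∀ u v : H, ‖u‖ ≤ r → ‖v‖ ≤ r →
        ω ‖u - v‖ ≤ ⟪gradient Φ u - gradient Φ v, u - v⟫)
    (x x' x'' : ℝ → H) (hsol : IsDINAVDSolution α β t₀ Φ x x' x'') :
    ∃ xstar : H, (∀ w, Φ xstar ≤ Φ w) ∧ (∀ z : H, (∀ w, Φ z ≤ Φ w) → z = xstar) ∧
      Tendsto (fun t => ‖x t - xstar‖) atTop (𝓝 0) := by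
  obtain ⟨z, hz⟩ := hne
  have hd : Differentiable ℝ Φ := hΦ.differentiable (by norm_num)
  have hg0 := aux_grad_zero Φ z hz
  refine ⟨z, hz, ?_, ?_⟩
  · intro y hy
    obtain ⟨ω, -, hnn, h0, hω⟩ := hmono (max ‖y‖ ‖z‖ + 1) (by positivity)
    have := hω y z (by linarith [le_max_left ‖y‖ ‖z‖]) (by linarith [le_max_right ‖y‖ ‖z‖])
    rw [hg0, aux_grad_zero Φ y hy, sub_zero, inner_zero_left] at this
    have h1 := (h0 _ (norm_nonneg _)).1 (le_antisymm this (hnn _ (norm_nonneg _)))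
    exact sub_eq_zero.1 (norm_eq_zero.1 h1)
  · obtain ⟨T, C, hT, hTC⟩ :=
      aux_lyap α β t₀ hα hβ ht₀ Φ hconv hΦ z hz x x' x'' hsol
    have hC : 0 ≤ C := (sq_nonneg _).trans (hTC T le_rfl).1
    obtain ⟨ω, hmon, hnn, h0, hω⟩ := hmono (‖z‖ + √C + 1) (by positivity)
    have hkey : ∀ t, T ≤ t → ω (‖x t - z‖ / 2) ≤ Φ (x t) - Φ z := by
      intro t ht
      have hb : ‖x t - z‖ ≤ √C := Real.le_sqrt_of_sq_le (hTC t ht).1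
      have e1 : z + (1 / 2 : ℝ) • (x t - z) - z = (1 / 2 : ℝ) • (x t - z) := by abel
      have e2 : x t - (z + (1 / 2 : ℝ) • (x t - z)) = (1 / 2 : ℝ) • (x t - z) := by module
      have hn : ‖(1 / 2 : ℝ) • (x t - z)‖ = ‖x t - z‖ / 2 := by
        rw [norm_smul]; norm_num; ring
      have h1 := hω (z + (1 / 2 : ℝ) • (x t - z)) z (by
        have := norm_add_le z ((1 / 2 : ℝ) • (x t - z))
        rw [hn] at this
        linarith [norm_nonneg (x t - z)]) (by linarith [Real.sqrt_nonneg C])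
      rw [e1, hg0, sub_zero, hn] at h1
      have h2 := aux_grad_ineq Φ hconv hd (z + (1 / 2 : ℝ) • (x t - z)) (x t)
      rw [e2] at h2
      linarith [hz (z + (1 / 2 : ℝ) • (x t - z))]
    rw [Metric.tendsto_atTop]
    intro ε hε
    have hωε : 0 < ω (ε / 2) := by
      refine lt_of_le_of_ne (hnn _ (by positivity)) fun h => ?_
      have := (h0 _ (by positivity)).1 h.symm
      linarith
    refine ⟨max T (max 1 (C / ω (ε / 2) + 1)), fun t ht => ?_⟩
    have ht1 : T ≤ t := (le_max_left _ _).trans ht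
    have ht2 : 1 ≤ t := ((le_max_left _ _).trans (le_max_right _ _)).trans ht
    have ht3 : C / ω (ε / 2) + 1 ≤ t := ((le_max_right _ _).trans (le_max_right _ _)).trans ht
    rw [Real.dist_eq, sub_zero, abs_of_nonneg (norm_nonneg _)]
    by_contra! hcon
    have h1 : ω (ε / 2) ≤ ω (‖x t - z‖ / 2) :=
      hmon (Set.mem_Ici.2 (by positivity)) (Set.mem_Ici.2 (by positivity)) (by linarith)
    have h2 := hkey t ht1
    have h3 := (hTC t ht1).2
    have h4 : C < t * ω (ε / 2) := by
      rw [← div_lt_iff₀ hωε]; linarith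
    have h5 : t * ω (ε / 2) ≤ t ^ 2 * (Φ (x t) - Φ z) := by
      apply mul_le_mul _ (h1.trans h2) hωε.le (by positivity)
      nlinarith
    linarith
end

section
/- Let α ≥ 3, β > 0, t₀ > 0, let Φ : H → ℝ be twice continuously differentiable and strongly convex (there exists μ > 0 such that z ↦ Φ(z) − (μ/2)‖z‖² is convex), and let x : [t₀, ∞) → H be a solution of (DIN-AVD). Then argmin Φ is a singleton {x*}, and there exist constants C and T ≥ t₀ such that for all t ≥ T, Φ(x(t)) − min Φ ≤ C·t^{−2α/3} and ‖x(t) − x*‖ ≤ C·t^{−α/3}. -/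
open Filter MeasureTheory Set
open scoped Topology RealInnerProductSpace

variable {H : Type*} [NormedAddCommGroup H] [InnerProductSpace ℝ H] [CompleteSpace H]

theorem din_first_order (Φ : H → ℝ) (hd : Differentiable ℝ Φ) (μ : ℝ)
    (hsc : StrongConvexOn Set.univ μ Φ) (a b : H) :
    Φ a + ⟪gradient Φ a, b - a⟫ + μ / 2 * ‖b - a‖ ^ 2 ≤ Φ b := by
  have hg : HasGradientAt Φ (gradient Φ a) a := (hd a).hasGradientAt
  have hline : HasDerivAt (fun s : ℝ => a + s • (b - a)) (b - a) 0 := by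
    simpa using ((hasDerivAt_id (0 : ℝ)).smul_const (b - a)).const_add a
  have hh : HasDerivAt (fun s : ℝ => Φ (a + s • (b - a))) ⟪gradient Φ a, b - a⟫ 0 := by
    have h1 : HasFDerivAt Φ (InnerProductSpace.toDual ℝ H (gradient Φ a))
        (a + (0 : ℝ) • (b - a)) := by
      simpa using hg.hasFDerivAt
    simpa [Function.comp_def] using h1.comp_hasDerivAt (0 : ℝ) hline
  have ht : Tendsto (fun s : ℝ => s⁻¹ * (Φ (a + s • (b - a)) - Φ a)) (𝓝[>] 0)
      (𝓝 ⟪gradient Φ a, b - a⟫) := by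
    have := hh.tendsto_slope_zero_right
    simpa using this
  have ht2 : Tendsto (fun s : ℝ => Φ b - Φ a - (1 - s) * (μ / 2 * ‖b - a‖ ^ 2)) (𝓝[>] 0)
      (𝓝 (Φ b - Φ a - (1 - 0) * (μ / 2 * ‖b - a‖ ^ 2))) := by
    apply Tendsto.mono_left _ nhdsWithin_le_nhds
    apply Continuous.tendsto
    fun_prop
  have hle := le_of_tendsto_of_tendsto ht ht2 (by
    have : Set.Ioo (0 : ℝ) 1 ∈ 𝓝[>] (0 : ℝ) := Ioo_mem_nhdsGT one_pos
    filter_upwards [this] with s hs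
    have h := hsc.2 (Set.mem_univ a) (Set.mem_univ b) (by linarith [hs.2] : 0 ≤ 1 - s)
      hs.1.le (by ring)
    have e : (1 - s) • a + s • b = a + s • (b - a) := by module
    rw [e, norm_sub_rev] at h
    simp only [smul_eq_mul] at h
    rw [inv_mul_le_iff₀ hs.1]
    nlinarith)
  linarith

theorem din_exists_min (Φ : H → ℝ) (hd : Differentiable ℝ Φ) (μ : ℝ) (hμ : 0 < μ)
    (hsc : StrongConvexOn Set.univ μ Φ) : ∃ z : H, ∀ w, Φ z ≤ Φ w := by
  have hbdd : BddBelow (Set.range Φ) := by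
    refine ⟨Φ 0 - ‖gradient Φ 0‖ ^ 2 / (2 * μ), ?_⟩
    rintro _ ⟨z, rfl⟩
    have h := din_first_order Φ hd μ hsc 0 z
    simp only [sub_zero] at h
    have h2 := abs_le.1 (abs_real_inner_le_norm (gradient Φ 0) z)
    have h3 : ‖gradient Φ 0‖ * ‖z‖ ≤ ‖gradient Φ 0‖ ^ 2 / (2 * μ) + μ / 2 * ‖z‖ ^ 2 := by
      have : ‖gradient Φ 0‖ ^ 2 / (2 * μ) + μ / 2 * ‖z‖ ^ 2 - ‖gradient Φ 0‖ * ‖z‖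
        = (‖gradient Φ 0‖ - μ * ‖z‖) ^ 2 / (2 * μ) := by field_simp; ring
      have : 0 ≤ (‖gradient Φ 0‖ - μ * ‖z‖) ^ 2 / (2 * μ) := by positivity
      linarith
    linarith [h2.1]
  set m := sInf (Set.range Φ) with hm
  have hmle : ∀ w, m ≤ Φ w := fun w => csInf_le hbdd ⟨w, rfl⟩
  have hseq : ∀ n : ℕ, ∃ z : H, Φ z < m + 1 / ((n : ℝ) + 1) := by
    intro n
    obtain ⟨_, ⟨z, rfl⟩, hz⟩ := exists_lt_of_csInf_lt (Set.range_nonempty Φ)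
      (show sInf (Set.range Φ) < m + 1 / ((n : ℝ) + 1) by
        have : 0 < 1 / ((n : ℝ) + 1) := by positivity
        linarith)
    exact ⟨z, hz⟩
  choose z hz using hseq
  have hmid : ∀ a b : H, ‖a - b‖ ^ 2 ≤ 8 / μ * ((Φ a + Φ b) / 2 - m) := by
    intro a b
    have h := hsc.2 (Set.mem_univ a) (Set.mem_univ b) (by norm_num : (0 : ℝ) ≤ 1 / 2)
      (by norm_num : (0 : ℝ) ≤ 1 / 2) (by norm_num)
    have h2 := hmle ((1 / 2 : ℝ) • a + (1 / 2 : ℝ) • b)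
    simp only [smul_eq_mul] at h
    rw [div_mul_eq_mul_div, le_div_iff₀ hμ]
    nlinarith
  have hlim : Tendsto (fun n : ℕ => 1 / ((n : ℝ) + 1)) atTop (𝓝 0) :=
    tendsto_one_div_add_atTop_nhds_zero_nat
  have hcau : CauchySeq z := by
    refine cauchySeq_of_le_tendsto_0 (fun n : ℕ => Real.sqrt (8 / μ * (1 / ((n : ℝ) + 1)))) ?_ ?_
    · intro i j N hi hj
      rw [dist_eq_norm]
      apply Real.le_sqrt_of_sq_le
      refine (hmid _ _).trans ?_
      have h1 : 1 / ((i : ℝ) + 1) ≤ 1 / ((N : ℝ) + 1) := by gcongr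
      have h2 : 1 / ((j : ℝ) + 1) ≤ 1 / ((N : ℝ) + 1) := by gcongr
      gcongr
      linarith [hz i, hz j]
    · have := (Real.continuous_sqrt.tendsto _).comp (hlim.const_mul (8 / μ))
      simpa [Function.comp_def] using this
  obtain ⟨zs, hzs⟩ := cauchySeq_tendsto_of_complete hcau
  refine ⟨zs, fun w => ?_⟩
  have h1 : Tendsto (fun n => Φ (z n)) atTop (𝓝 (Φ zs)) := (hd.continuous.tendsto zs).comp hzs
  have h2 : Tendsto (fun n : ℕ => m + 1 / ((n : ℝ) + 1)) atTop (𝓝 m) := by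
    simpa using hlim.const_add m
  exact (le_of_tendsto_of_tendsto' h1 h2 (fun n => (hz n).le)).trans (hmle w)

theorem din_decay (l K t₀ : ℝ) (ht₀ : 0 < t₀) (hK : 0 ≤ K) (F F' : ℝ → ℝ)
    (hF0 : ∀ t, t₀ ≤ t → 0 ≤ F t)
    (hF : ∀ t, t₀ ≤ t → HasDerivAt F (F' t) t)
    (hle : ∀ t, t₀ ≤ t → F' t ≤ -(l / t) * F t + K / t ^ 2 * F t) :
    ∃ C, 0 ≤ C ∧ ∀ t, t₀ ≤ t → F t ≤ C * t ^ (-l) := by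
  have hG : ∀ t, t₀ ≤ t → HasDerivAt (fun t => t ^ l * Real.exp (K / t) * F t)
      (t ^ l * Real.exp (K / t) * (F' t + l / t * F t - K / t ^ 2 * F t)) t := by
    intro t ht
    have htp : 0 < t := ht₀.trans_le ht
    have h1 := Real.hasDerivAt_rpow_const (x := t) (p := l) (Or.inl htp.ne')
    have h2 : HasDerivAt (fun t => Real.exp (K / t)) (Real.exp (K / t) * (-K / t ^ 2)) t := by
      have := ((hasDerivAt_const t K).div (hasDerivAt_id t) htp.ne').exp
      simpa using this
    have h3 := (h1.mul h2).mul (hF t ht)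
    refine h3.congr_deriv ?_
    rw [Real.rpow_sub_one htp.ne']
    simp only [Pi.mul_apply]
    field_simp
    ring
  have hanti : AntitoneOn (fun t => t ^ l * Real.exp (K / t) * F t) (Set.Ici t₀) := by
    apply antitoneOn_of_deriv_nonpos (convex_Ici t₀)
    · exact fun t ht => (hG t ht).continuousAt.continuousWithinAt
    · intro t ht
      rw [interior_Ici] at ht
      exact (hG t ht.le).differentiableAt.differentiableWithinAt
    · intro t ht
      rw [interior_Ici] at ht
      rw [(hG t ht.le).deriv]
      have htp : 0 < t := ht₀.trans ht
      apply mul_nonpos_of_nonneg_of_nonpos (by positivity)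
      linarith [hle t ht.le]
  refine ⟨t₀ ^ l * Real.exp (K / t₀) * F t₀, mul_nonneg (by positivity) (hF0 _ le_rfl), ?_⟩
  intro t ht
  have htp : 0 < t := ht₀.trans_le ht
  have h := hanti (Set.mem_Ici.2 le_rfl) (Set.mem_Ici.2 ht) ht
  simp only at h
  rw [Real.rpow_neg htp.le, ← div_eq_mul_inv, le_div_iff₀ (by positivity)]
  refine le_trans ?_ h
  have h1 : 1 ≤ Real.exp (K / t) := Real.one_le_exp (by positivity)
  have h2 : 0 ≤ F t * t ^ l := mul_nonneg (hF0 t ht) (by positivity)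
  nlinarith

/-- The scalar estimate: `U, V, G` are norms, `W` the function gap. -/
theorem din_scalar (l β μ t c U V G W uv ug gv : ℝ) (hβ : 0 < β) (hμ : 0 < μ) (ht : 0 < t)
    (hl : 0 < l) (huv : |uv| ≤ U * V) (hug : |ug| ≤ U * G)
    (hgv : W ≤ gv) (hW : μ / 2 * V ^ 2 ≤ W) :
    -(l / (2 * t)) * U ^ 2 + c / t ^ 2 * uv + β * l / (2 * t) * ug - l / t * gv - β * G ^ 2
      ≤ -(l / t) * (W + U ^ 2 / 2)
        + (|c| * (1 + 1 / μ) + β * l ^ 2 / 8) / t ^ 2 * (W + U ^ 2 / 2) := by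
  have hW0 : 0 ≤ W := le_trans (by positivity) hW
  have h1 : c / t ^ 2 * uv ≤ |c| / t ^ 2 * ((U ^ 2 + V ^ 2) / 2) := by
    calc c / t ^ 2 * uv ≤ |c / t ^ 2 * uv| := le_abs_self _
      _ = |c| / t ^ 2 * |uv| := by rw [abs_mul, abs_div, abs_of_pos (by positivity : 0 < t ^ 2)]
      _ ≤ _ := by gcongr; nlinarith [sq_nonneg (U - V)]
  have hV : V ^ 2 ≤ 2 / μ * W := by
    rw [div_mul_eq_mul_div, le_div_iff₀ hμ]; linarith
  have h1' : |c| / t ^ 2 * ((U ^ 2 + V ^ 2) / 2)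
      ≤ |c| / t ^ 2 * ((1 + 1 / μ) * (W + U ^ 2 / 2)) := by
    gcongr
    have : 0 ≤ 1 / μ * U ^ 2 := by positivity
    have e : 2 / μ * W = 2 * (1 / μ * W) := by ring
    nlinarith
  have h2 : β * l / (2 * t) * ug ≤ β * G ^ 2 + β * l ^ 2 / (16 * t ^ 2) * U ^ 2 := by
    have a : β * l / (2 * t) * ug ≤ β * l / (2 * t) * (U * G) := by
      gcongr; exact (le_abs_self _).trans hug
    have b : β * G ^ 2 + β * l ^ 2 / (16 * t ^ 2) * U ^ 2 - β * l / (2 * t) * (U * G)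
        = β * (G - l / (4 * t) * U) ^ 2 := by field_simp; ring
    have : 0 ≤ β * (G - l / (4 * t) * U) ^ 2 := by positivity
    linarith
  have h2' : β * l ^ 2 / (16 * t ^ 2) * U ^ 2 ≤ β * l ^ 2 / 8 / t ^ 2 * (W + U ^ 2 / 2) := by
    have : β * l ^ 2 / 8 / t ^ 2 * (W + U ^ 2 / 2)
      = β * l ^ 2 / 8 / t ^ 2 * W + β * l ^ 2 / (16 * t ^ 2) * U ^ 2 := by field_simp; ring
    have : 0 ≤ β * l ^ 2 / 8 / t ^ 2 * W := by positivity
    linarith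
  have h3 : l / t * W ≤ l / t * gv := by gcongr
  have e1 : (|c| * (1 + 1 / μ) + β * l ^ 2 / 8) / t ^ 2 * (W + U ^ 2 / 2)
    = |c| / t ^ 2 * ((1 + 1 / μ) * (W + U ^ 2 / 2))
      + β * l ^ 2 / 8 / t ^ 2 * (W + U ^ 2 / 2) := by ring
  have e2 : -(l / t) * (W + U ^ 2 / 2) = -(l / t * W) + -(l / (2 * t)) * U ^ 2 := by
    field_simp; ring
  linarith

theorem stmt15 (α β t₀ : ℝ) (hα : 3 ≤ α) (hβ : 0 < β) (ht₀ : 0 < t₀)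
    (Φ : H → ℝ) (hΦ : ContDiff ℝ 2 Φ)
    (μ : ℝ) (hμ : 0 < μ)
    (hsc : ConvexOn ℝ Set.univ (fun z : H => Φ z - μ / 2 * ‖z‖ ^ 2))
    (x x' x'' : ℝ → H) (hsol : IsDINAVDSolution α β t₀ Φ x x' x'') :
    ∃ xstar : H, (∀ w, Φ xstar ≤ Φ w) ∧ (∀ z : H, (∀ w, Φ z ≤ Φ w) → z = xstar) ∧
      ∃ C T : ℝ, t₀ ≤ T ∧ ∀ t, T ≤ t →
        Φ (x t) - Φ xstar ≤ C * t ^ (-(2 * α) / 3) ∧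
        ‖x t - xstar‖ ≤ C * t ^ (-α / 3) := by
  have hsc' : StrongConvexOn Set.univ μ Φ := strongConvexOn_iff_convex.2 hsc
  have hd : Differentiable ℝ Φ := hΦ.differentiable (by norm_num)
  have hfo := din_first_order Φ hd μ hsc'
  obtain ⟨xs, hxs⟩ := din_exists_min Φ hd μ hμ hsc'
  have hgrad0 : gradient Φ xs = 0 := by
    have : IsLocalMin Φ xs := Filter.Eventually.of_forall hxs
    simp [gradient, this.fderiv_eq_zero]
  have hquad : ∀ z, μ / 2 * ‖z - xs‖ ^ 2 ≤ Φ z - Φ xs := by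
    intro z
    have := hfo xs z
    rw [hgrad0, inner_zero_left] at this
    linarith
  have hgd : Differentiable ℝ (gradient Φ) := by
    have h1 : Differentiable ℝ (fderiv ℝ Φ) :=
      (hΦ.fderiv_right (m := 1) (by norm_num)).differentiable (by norm_num)
    exact ((InnerProductSpace.toDual ℝ H).symm.toContinuousLinearEquiv.differentiable).comp h1
  obtain ⟨hx, hx', -, heq⟩ := hsol
  refine ⟨xs, hxs, ?_, ?_⟩
  · intro z hz
    have h1 := hquad z
    have h2 : ‖z - xs‖ ^ 2 ≤ 0 := by
      have := hz xs
      by_contra hcon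
      push Not at hcon
      have : 0 < μ / 2 * ‖z - xs‖ ^ 2 := by positivity
      linarith
    have h3 : ‖z - xs‖ = 0 := by
      have := norm_nonneg (z - xs)
      nlinarith
    exact sub_eq_zero.1 (norm_eq_zero.1 h3)
  · set l : ℝ := 2 * α / 3 with hl
    have hlp : 0 < l := by rw [hl]; linarith
    let u : ℝ → H := fun t => (l / t) • (x t - xs) + x' t + β • gradient Φ (x t)
    let c : ℝ := l ^ 2 / 2 - l
    let ud : ℝ → H := fun t => -(l / (2 * t)) • u t + (c / t ^ 2) • (x t - xs)
      + (β * l / (2 * t) - 1) • gradient Φ (x t)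
    have hu : ∀ t, t₀ ≤ t → HasDerivAt u (ud t) t := by
      intro t ht
      have htp : 0 < t := ht₀.trans_le ht
      have h1 : HasDerivAt (fun t => l / t) (-l / t ^ 2) t := by
        refine ((hasDerivAt_const t l).div (hasDerivAt_id t) htp.ne').congr_deriv ?_
        simp
      have h2 := h1.smul ((hx t ht).sub_const xs)
      have h3 : HasDerivAt (fun t => gradient Φ (x t))
          (fderiv ℝ (gradient Φ) (x t) (x' t)) t :=
        (hgd (x t)).hasFDerivAt.comp_hasDerivAt t (hx t ht)
      have h4 := (h2.add (hx' t ht)).add (h3.const_smul β)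
      refine h4.congr_deriv ?_
      have hode : x'' t + β • (fderiv ℝ (gradient Φ) (x t)) (x' t)
          = -(α / t) • x' t - gradient Φ (x t) := by
        have := heq t ht
        rw [← sub_eq_zero, ← this]
        module
      have ha : α = 3 / 2 * l := by rw [hl]; ring
      rw [add_assoc, hode, ha]
      simp only [ud, u, c]
      match_scalars <;> field_simp <;> ring
    let F : ℝ → ℝ := fun t => (Φ (x t) - Φ xs) + ‖u t‖ ^ 2 / 2
    obtain ⟨C, hC0, hC⟩ := din_decay l (|c| * (1 + 1 / μ) + β * l ^ 2 / 8) t₀ ht₀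
      (by positivity) F (fun t => ⟪gradient Φ (x t), x' t⟫ + ⟪u t, ud t⟫)
      (fun t _ => by
        have := hxs (x t)
        have : 0 ≤ ‖u t‖ ^ 2 := by positivity
        simp only [F]; linarith)
      (fun t ht => by
        have h1 : HasDerivAt (fun t => Φ (x t)) ⟪gradient Φ (x t), x' t⟫ t := by
          simpa [Function.comp_def] using
            (hd (x t)).hasGradientAt.hasFDerivAt.comp_hasDerivAt t (hx t ht)
        have h2 := (hu t ht).norm_sq.div_const 2
        refine ((h1.sub_const (Φ xs)).add h2).congr_deriv ?_
        ring)
      (fun t ht => by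
        have htp : 0 < t := ht₀.trans_le ht
        have hgv : Φ (x t) - Φ xs ≤ ⟪gradient Φ (x t), x t - xs⟫ := by
          have := hfo (x t) xs
          rw [← neg_sub (x t) xs, inner_neg_right] at this
          have : 0 ≤ μ / 2 * ‖-(x t - xs)‖ ^ 2 := by positivity
          linarith
        have h := din_scalar l β μ t c ‖u t‖ ‖x t - xs‖ ‖gradient Φ (x t)‖ (Φ (x t) - Φ xs)
          ⟪u t, x t - xs⟫ ⟪u t, gradient Φ (x t)⟫ ⟪gradient Φ (x t), x t - xs⟫ hβ hμ htp hlp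
          (abs_real_inner_le_norm _ _) (abs_real_inner_le_norm _ _) hgv (hquad _)
        refine le_trans (le_of_eq ?_) h
        have e : x' t = u t - (l / t) • (x t - xs) - β • gradient Φ (x t) := by
          simp only [u]; abel
        rw [e]
        simp only [ud, inner_add_right, inner_sub_right, inner_smul_right,
          real_inner_self_eq_norm_sq]
        rw [real_inner_comm (u t) (gradient Φ (x t))]
        ring)
    refine ⟨max C (Real.sqrt (2 / μ * C)), t₀, le_rfl, fun t ht => ?_⟩
    have htp : 0 < t := ht₀.trans_le ht
    have hW : Φ (x t) - Φ xs ≤ C * t ^ (-l) := by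
      have := hC t ht
      have : 0 ≤ ‖u t‖ ^ 2 := by positivity
      simp only [F] at *
      linarith
    have hle : -(2 * α) / 3 = -l := by rw [hl]; ring
    constructor
    · rw [hle]
      refine hW.trans ?_
      gcongr
      exact le_max_left _ _
    · have h1 : ‖x t - xs‖ ≤ Real.sqrt (2 / μ * C) * t ^ (-α / 3) := by
        refine (sq_le_sq₀ (norm_nonneg _) (by positivity)).1 ?_
        rw [mul_pow, Real.sq_sqrt (by positivity), ← Real.rpow_natCast (t ^ (-α / 3)) 2,
          ← Real.rpow_mul htp.le]
        have e : -α / 3 * ((2 : ℕ) : ℝ) = -l := by rw [hl]; push_cast; ring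
        rw [e, mul_assoc, div_mul_eq_mul_div, le_div_iff₀ hμ]
        linarith [hquad (x t)]
      refine h1.trans ?_
      gcongr
      exact le_max_right _ _
end

section
/- Let α ≥ 0, β > 0, t₀ > 0, let Φ : H → ℝ be convex and twice continuously differentiable, and let x : [t₀, ∞) → H be twice continuously differentiable. Define y : [t₀, ∞) → H by y(t) = −β(ẋ(t) + β∇Φ(x(t))) + (1 − αβ/t)·x(t). Then x satisfies ẍ(t) + (α/t)ẋ(t) + β∇²Φ(x(t))ẋ(t) + ∇Φ(x(t)) = 0 for all t ≥ t₀ if and only if the pair (x, y) satisfies, for all t ≥ t₀, the first-order system ẋ(t) + β∇Φ(x(t)) − (1/β − α/t)x(t) + (1/β)y(t) = 0 and ẏ(t) − (1/β − α/t + αβ/t²)x(t) + (1/β)y(t) = 0. -/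
open Filter MeasureTheory Set
open scoped Topology RealInnerProductSpace

variable {H : Type*} [NormedAddCommGroup H] [InnerProductSpace ℝ H] [CompleteSpace H]

theorem stmt16 (α β t₀ : ℝ) (hα : 0 ≤ α) (hβ : 0 < β) (ht₀ : 0 < t₀)
    (Φ : H → ℝ) (hconv : ConvexOn ℝ Set.univ Φ) (hΦ : ContDiff ℝ 2 Φ)
    (x x' x'' : ℝ → H)
    (hx' : ∀ t ∈ Set.Ici t₀, HasDerivAt x (x' t) t)
    (hx'' : ∀ t ∈ Set.Ici t₀, HasDerivAt x' (x'' t) t)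
    (hcont : ContinuousOn x'' (Set.Ici t₀))
    (y : ℝ → H)
    (hy : ∀ t, y t = (-β) • (x' t + β • gradient Φ (x t)) + (1 - α * β / t) • x t) :
    (∀ t ∈ Set.Ici t₀,
        x'' t + (α / t) • x' t + β • (fderiv ℝ (gradient Φ) (x t)) (x' t)
          + gradient Φ (x t) = 0) ↔
    ((∀ t ∈ Set.Ici t₀,
        x' t + β • gradient Φ (x t) - (1 / β - α / t) • x t + (1 / β) • y t = 0) ∧
      (∀ t ∈ Set.Ici t₀,
        HasDerivAt y ((1 / β - α / t + α * β / t ^ 2) • x t - (1 / β) • y t) t)) := by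
  have hgrad : Differentiable ℝ (gradient Φ) := by
    have h1 : Differentiable ℝ (fderiv ℝ Φ) :=
      (hΦ.fderiv_right (m := 1) (by norm_num)).differentiable (by norm_num)
    exact ((InnerProductSpace.toDual ℝ H).symm.toContinuousLinearEquiv
      : StrongDual ℝ H ≃L[ℝ] H).differentiable.comp h1
  have key : ∀ t ∈ Set.Ici t₀, HasDerivAt y
      (((1 / β - α / t + α * β / t ^ 2) • x t - (1 / β) • y t) - β •
        (x'' t + (α / t) • x' t + β • (fderiv ℝ (gradient Φ) (x t)) (x' t)
          + gradient Φ (x t))) t := by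
    intro t ht
    have htpos : t ≠ 0 := (lt_of_lt_of_le ht₀ ht).ne'
    have hg : HasDerivAt (fun s => gradient Φ (x s))
        ((fderiv ℝ (gradient Φ) (x t)) (x' t)) t :=
      (hgrad (x t)).hasFDerivAt.comp_hasDerivAt t (hx' t ht)
    have hs : HasDerivAt (fun s : ℝ => 1 - α * β / s) (α * β / t ^ 2) t := by
      have := ((hasDerivAt_inv htpos).const_mul (α * β)).const_sub 1
      simp only [div_eq_mul_inv]
      exact this.congr_deriv (by ring)
    have h := (((hx'' t ht).add (hg.const_smul β)).const_smul (-β)).add (hs.smul (hx' t ht))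
    have hyf : y = fun s => (-β) • (x' s + β • gradient Φ (x s)) + (1 - α * β / s) • x s :=
      funext hy
    have h2 : HasDerivAt y
        ((-β) • (x'' t + β • (fderiv ℝ (gradient Φ) (x t)) (x' t))
          + ((1 - α * β / t) • x' t + (α * β / t ^ 2) • x t)) t := by
      rw [hyf]
      exact h
    refine h2.congr_deriv ?_
    rw [hy t]
    match_scalars <;> field_simp <;> ring
  constructor
  · intro h
    refine ⟨?_, ?_⟩
    · intro t ht
      have htpos : t ≠ 0 := (lt_of_lt_of_le ht₀ ht).ne'
      rw [hy t]
      match_scalars <;> field_simp <;> ring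
    · intro t ht
      have := key t ht
      rwa [h t ht, smul_zero, sub_zero] at this
  · rintro ⟨-, h⟩ t ht
    have h3 := (key t ht).unique (h t ht)
    rw [sub_eq_self] at h3
    exact (smul_eq_zero.mp h3).resolve_left hβ.ne'
end
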